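/- arXiv:2402.02720 — 3 statements merged into one kernel-verified Lean document; each statement's English description precedes it below -/
import Mathlib

section
/- Fix any time horizon T ∈ ℕ_+, discount factors λ_1,…,λ_{T-1} ∈ (0,∞), Lipschitz constant G > 0, variance budget V ∈ (0, G²·H_T], and any nonzero u ∈ X with −u ∈ X, where X ⊂ ℝ^d is closed and convex. For any online algorithm (i.e., any sequence of maps producing x_t ∈ X as a function of g_1,…,g_{t-1}), there exists a sequence of linear losses l_t(x) = ⟨g_t, x⟩ with ‖g_t‖ ≤ G for all t ∈ [1:T], such that Σ_{t=1}^T (∏_{i=t}^{T-1} λ_i²)·‖g_t‖² = V and max( Reg_T(l, u), Reg_T(l, −u) ) ≥ (1/√2)·‖u‖·√V, where Reg_T(l, w) := Σ_{t=1}^T (∏_{i=t}^{T-1} λ_i)·[l_t(x_t) − l_t(w)]. -/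
open scoped BigOperators RealInnerProductSpace

/-!
Play `g t = x t • v` with `v` a positive multiple of `u` and uniformly random signs `x t`. A causal
prediction does not see the sign `x t`, so the algorithm's own discounted loss averages to zero,
while the larger of the two comparator terms averages to `𝔼 |∑ t, w t * x t| * ⟪v, u⟫`. The sharp
Khintchine inequality bounds this from below with the constant `1 / √2`, and some choice of signs
does at least as well as the average.

The Khintchine inequality is proved following Latała and Oleszkiewicz: `f x = ‖∑ i, x i • a i‖` is
an even function on the sign cube, so its Walsh expansion has no terms of degree one, and the
spectral gap of the Laplacian doubles on the complement of the constants. On the other hand the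
triangle inequality gives the pointwise bound `laplacian f ≤ 2 * f`.
-/

/-- The sign cube `{±1}^ι`. The signs are units of `ℤ`, so that they act on every additive group
and pointwise negation is the antipodal map. -/
abbrev SignCube (ι : Type*) := ι → ℤˣ

namespace SignCube

variable {ι : Type*}

/-- The Walsh functions: the characters of the sign cube, and the eigenfunctions of its
Laplacian. -/
def walsh (S : Finset ι) (x : SignCube ι) : ℝ := ∏ i ∈ S, ((x i : ℤ) : ℝ)

lemma walsh_neg (S : Finset ι) (x : SignCube ι) : walsh S (-x) = (-1) ^ S.card * walsh S x := by
  simp [walsh, Finset.prod_neg]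

lemma sum_walsh_mul_walsh [Fintype ι] (x y : SignCube ι) :
    ∑ S, walsh S x * walsh S y = if x = y then 2 ^ Fintype.card ι else 0 := by
  classical
  have product : ∑ S, walsh S x * walsh S y = ∏ i, (1 + ((x i * y i : ℤˣ) : ℤ) : ℝ) := by
    simp [walsh, Finset.prod_one_add, Finset.prod_mul_distrib]
  rw [product]
  split_ifs with h
  · simp [h, one_add_one_eq_two]
  · obtain ⟨i, hi⟩ := Function.ne_iff.1 h
    refine Finset.prod_eq_zero (Finset.mem_univ i) ?_
    simp [Int.units_ne_iff_eq_neg.1 hi]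

variable [DecidableEq ι]

/-- The neighbour of `x` in the sign cube along the coordinate `i`. -/
def flip (i : ι) (x : SignCube ι) : SignCube ι := Function.update x i (-x i)

lemma flip_involutive (i : ι) : Function.Involutive (flip i) := fun x => by simp [flip]

@[simp]
lemma flip_apply_self (i : ι) (x : SignCube ι) : flip i x i = -x i := by simp [flip]

lemma flip_apply_of_ne {i j : ι} (h : j ≠ i) (x : SignCube ι) : flip i x j = x j := by
  simp [flip, h]

lemma walsh_flip (S : Finset ι) (i : ι) (x : SignCube ι) :
    walsh S (flip i x) = (if i ∈ S then -1 else 1) * walsh S x := by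
  have factor (j : ι) :
      ((flip i x j : ℤ) : ℝ) = (if i = j then -1 else 1) * ((x j : ℤ) : ℝ) := by
    rcases eq_or_ne j i with rfl | h
    · simp
    · simp [flip_apply_of_ne h, h.symm]
  simp only [walsh, factor, Finset.prod_mul_distrib, Finset.prod_ite_eq]

variable [Fintype ι]

lemma card_eq : Fintype.card (SignCube ι) = 2 ^ Fintype.card ι := by simp

lemma sum_comp_flip {M : Type*} [AddCommMonoid M] (i : ι) (f : SignCube ι → M) :
    ∑ x, f (flip i x) = ∑ x, f x :=
  (flip_involutive i).bijective.sum_comp f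

lemma sum_eq_zero_of_flip_eq_neg {f : SignCube ι → ℝ} {i : ι} (h : ∀ x, f (flip i x) = -f x) :
    ∑ x, f x = 0 := by
  have h_neg := sum_comp_flip i f
  simp only [h, Finset.sum_neg_distrib] at h_neg
  linarith

/-- The unnormalised Walsh coefficient of `f` at `S`, that is `2 ^ |ι|` times the usual one. -/
def walshCoeff (f : SignCube ι → ℝ) (S : Finset ι) : ℝ := ∑ x, walsh S x * f x

lemma walshCoeff_empty (f : SignCube ι → ℝ) : walshCoeff f ∅ = ∑ x, f x := by
  simp [walshCoeff, walsh]

theorem sum_walshCoeff_mul_walshCoeff (f g : SignCube ι → ℝ) :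
    ∑ S, walshCoeff f S * walshCoeff g S = 2 ^ Fintype.card ι * ∑ x, f x * g x := by
  calc ∑ S, walshCoeff f S * walshCoeff g S
      = ∑ x, ∑ y, f x * g y * ∑ S, walsh S x * walsh S y := by
        simp_rw [walshCoeff, Finset.sum_mul_sum, Finset.mul_sum]
        rw [Finset.sum_comm]
        refine Finset.sum_congr rfl fun x _ => ?_
        rw [Finset.sum_comm]
        exact Finset.sum_congr rfl fun y _ => Finset.sum_congr rfl fun S _ => by ring
    _ = 2 ^ Fintype.card ι * ∑ x, f x * g x := by
        simp [sum_walsh_mul_walsh, Finset.mul_sum, mul_comm]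

lemma walshCoeff_comp_flip (f : SignCube ι → ℝ) (i : ι) (S : Finset ι) :
    walshCoeff (fun x => f (flip i x)) S = (if i ∈ S then -1 else 1) * walshCoeff f S := by
  rw [walshCoeff, ← sum_comp_flip i]
  simp only [flip_involutive i _, walsh_flip, mul_assoc, walshCoeff, Finset.mul_sum]

lemma walshCoeff_eq_zero_of_even {f : SignCube ι → ℝ} (hf : f.Even) {S : Finset ι}
    (hS : Odd S.card) : walshCoeff f S = 0 := by
  have h_neg : walshCoeff f S = -walshCoeff f S := by
    conv_lhs => rw [walshCoeff, ← Equiv.sum_comp (Equiv.neg (SignCube ι))]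
    simp [walshCoeff, walsh_neg, hS.neg_one_pow, hf _]
  linarith

/-- The graph Laplacian of the sign cube, unnormalised and nonnegative: its eigenvalue at `walsh S`
is `2 * |S|`. -/
def laplacian (f : SignCube ι → ℝ) (x : SignCube ι) : ℝ := ∑ i, (f x - f (flip i x))

theorem walshCoeff_laplacian (f : SignCube ι → ℝ) (S : Finset ι) :
    walshCoeff (laplacian f) S = 2 * S.card * walshCoeff f S := by
  calc walshCoeff (laplacian f) S
      = ∑ i, (walshCoeff f S - walshCoeff (fun x => f (flip i x)) S) := by
        simp only [walshCoeff, laplacian, Finset.mul_sum, ← Finset.sum_sub_distrib, mul_sub]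
        exact Finset.sum_comm
    _ = ∑ i, if i ∈ S then 2 * walshCoeff f S else 0 := by
        refine Finset.sum_congr rfl fun i _ => ?_
        rw [walshCoeff_comp_flip]
        split_ifs <;> ring
    _ = 2 * S.card * walshCoeff f S := by
        simp only [Finset.sum_ite_mem, Finset.univ_inter, Finset.sum_const, nsmul_eq_mul]
        ring

theorem poincare_of_even {f : SignCube ι → ℝ} (hf : f.Even) :
    4 * (2 ^ Fintype.card ι * ∑ x, f x ^ 2 - (∑ x, f x) ^ 2) ≤
      2 ^ Fintype.card ι * ∑ x, f x * laplacian f x := by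
  have gap (S : Finset ι) :
      4 * (walshCoeff f S ^ 2 - if S = ∅ then (∑ x, f x) ^ 2 else 0) ≤
        2 * S.card * walshCoeff f S ^ 2 := by
    rcases S.eq_empty_or_nonempty with rfl | hS
    · simp [walshCoeff_empty]
    rcases Nat.even_or_odd S.card with h_even | h_odd
    · have two_le : (2 : ℝ) ≤ S.card := by
        exact_mod_cast Nat.le_of_dvd hS.card_pos h_even.two_dvd
      rw [if_neg hS.ne_empty]
      nlinarith [sq_nonneg (walshCoeff f S)]
    · simp [walshCoeff_eq_zero_of_even hf h_odd, hS.ne_empty]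
  calc 4 * (2 ^ Fintype.card ι * ∑ x, f x ^ 2 - (∑ x, f x) ^ 2)
      = ∑ S, 4 * (walshCoeff f S ^ 2 - if S = ∅ then (∑ x, f x) ^ 2 else 0) := by
        simp only [← Finset.mul_sum, Finset.sum_sub_distrib, Finset.sum_ite_eq', Finset.mem_univ,
          if_true, sq (walshCoeff f _), sum_walshCoeff_mul_walshCoeff, sq (f _)]
    _ ≤ ∑ S : Finset ι, 2 * S.card * walshCoeff f S ^ 2 := Finset.sum_le_sum fun S _ => gap S
    _ = ∑ S, walshCoeff f S * walshCoeff (laplacian f) S :=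
        Finset.sum_congr rfl fun S _ => by rw [walshCoeff_laplacian]; ring
    _ = 2 ^ Fintype.card ι * ∑ x, f x * laplacian f x := sum_walshCoeff_mul_walshCoeff _ _

lemma sum_flip_smul {F : Type*} [AddCommGroup F] (a : ι → F) (i : ι) (x : SignCube ι) :
    ∑ j, flip i x j • a j = ∑ j, x j • a j - 2 • x i • a i := by
  have term (j : ι) : flip i x j • a j = x j • a j - if j = i then 2 • x i • a i else 0 := by
    rcases eq_or_ne j i with rfl | h
    · simp only [flip_apply_self, Units.neg_smul, if_true]
      abel
    · simp [flip_apply_of_ne h, h]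
  simp [term]

lemma laplacian_norm_sum_smul_le {F : Type*} [SeminormedAddCommGroup F] [NormedSpace ℝ F]
    (a : ι → F) (x : SignCube ι) :
    laplacian (fun y => ‖∑ j, y j • a j‖) x ≤ 2 * ‖∑ j, x j • a j‖ := by
  have sum_neighbours : ∑ i, ∑ j, flip i x j • a j =
      (Fintype.card ι - 2 : ℝ) • ∑ j, x j • a j := by
    simp only [sum_flip_smul, Finset.sum_sub_distrib, ← Finset.smul_sum, Finset.sum_const,
      Finset.card_univ, sub_smul, Nat.cast_smul_eq_nsmul, ofNat_smul_eq_nsmul]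
  have triangle : (Fintype.card ι - 2 : ℝ) * ‖∑ j, x j • a j‖ ≤
      ∑ i, ‖∑ j, flip i x j • a j‖ :=
    calc (Fintype.card ι - 2 : ℝ) * ‖∑ j, x j • a j‖
        ≤ |(Fintype.card ι - 2 : ℝ)| * ‖∑ j, x j • a j‖ := by gcongr; exact le_abs_self _
      _ = ‖∑ i, ∑ j, flip i x j • a j‖ := by rw [sum_neighbours, norm_smul, Real.norm_eq_abs]
      _ ≤ ∑ i, ‖∑ j, flip i x j • a j‖ := norm_sum_le _ _
  simp only [laplacian, Finset.sum_sub_distrib, Finset.sum_const, Finset.card_univ, nsmul_eq_mul]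
  linarith

theorem two_pow_mul_sum_norm_sq_le {F : Type*} [SeminormedAddCommGroup F] [NormedSpace ℝ F]
    (a : ι → F) :
    2 ^ Fintype.card ι * ∑ x : SignCube ι, ‖∑ j, x j • a j‖ ^ 2 ≤
      2 * (∑ x : SignCube ι, ‖∑ j, x j • a j‖) ^ 2 := by
  set f : SignCube ι → ℝ := fun x => ‖∑ j, x j • a j‖ with hf
  have f_even : f.Even := fun x => by simp [hf, Units.neg_smul]
  have energy_le : ∑ x, f x * laplacian f x ≤ 2 * ∑ x, f x ^ 2 := by
    rw [Finset.mul_sum]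
    refine Finset.sum_le_sum fun x _ => ?_
    calc f x * laplacian f x ≤ f x * (2 * f x) :=
          mul_le_mul_of_nonneg_left (laplacian_norm_sum_smul_le a x) (norm_nonneg _)
      _ = 2 * f x ^ 2 := by ring
  have gap := (poincare_of_even f_even).trans
    (mul_le_mul_of_nonneg_left energy_le (by positivity))
  linarith

variable {E : Type*} [SeminormedAddCommGroup E] [InnerProductSpace ℝ E]

lemma sum_inner_smul_smul (a : ι → E) (i j : ι) :
    ∑ x : SignCube ι, ⟪x i • a i, x j • a j⟫ =
      if i = j then 2 ^ Fintype.card ι * ‖a i‖ ^ 2 else 0 := by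
  split_ifs with h
  · subst h
    simp [norm_units_zsmul]
  · refine sum_eq_zero_of_flip_eq_neg (i := i) fun x => ?_
    rw [flip_apply_self, flip_apply_of_ne (Ne.symm h), Units.neg_smul, inner_neg_left]

lemma sum_norm_sum_smul_sq (a : ι → E) :
    ∑ x : SignCube ι, ‖∑ j, x j • a j‖ ^ 2 = 2 ^ Fintype.card ι * ∑ j, ‖a j‖ ^ 2 := by
  simp only [← real_inner_self_eq_norm_sq, sum_inner, inner_sum]
  rw [Finset.sum_comm]
  simp_rw [Finset.sum_comm (s := Finset.univ (α := SignCube ι)), sum_inner_smul_smul]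
  simp [Finset.mul_sum]

theorem khintchine (a : ι → E) :
    2 ^ Fintype.card ι * √((∑ j, ‖a j‖ ^ 2) / 2) ≤ ∑ x : SignCube ι, ‖∑ j, x j • a j‖ := by
  have h := two_pow_mul_sum_norm_sq_le a
  rw [sum_norm_sum_smul_sq] at h
  refine le_of_sq_le_sq ?_ (by positivity)
  rw [mul_pow, Real.sq_sqrt (by positivity)]
  linarith

end SignCube

/-- Online prediction rules: the prediction in round `t` depends only on the gradients of the
rounds strictly before `t`. -/
def IsOnline {ι E : Type*} [Preorder ι] (alg : ι → (ι → E) → E) : Prop :=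
  ∀ t g₁ g₂, (∀ i < t, g₁ i = g₂ i) → alg t g₁ = alg t g₂

section WeightedRegret

variable {ι E : Type*} [Fintype ι] [SeminormedAddCommGroup E] [InnerProductSpace ℝ E]

/-- The regret of the predictions `p` against the comparator `u` for the linear losses `⟪g t, ·⟫`,
round `t` having weight `w t`; the discounted regret has `w t = ∏ i ∈ Icc t (T - 1), lam i`. -/
def weightedRegret (w : ι → ℝ) (g p : ι → E) (u : E) : ℝ := ∑ t, w t * (⟪g t, p t⟫ - ⟪g t, u⟫)

lemma max_weightedRegret_neg (w : ι → ℝ) (g p : ι → E) (u : E) :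
    max (weightedRegret w g p u) (weightedRegret w g p (-u)) =
      ∑ t, w t * ⟪g t, p t⟫ + |∑ t, w t * ⟪g t, u⟫| := by
  simp only [weightedRegret, inner_neg_right, mul_sub, mul_neg, Finset.sum_sub_distrib,
    Finset.sum_neg_distrib]
  rw [sub_eq_add_neg, sub_neg_eq_add, max_add_add_left, max_comm, ← abs_eq_max_neg]

variable [Preorder ι]

lemma IsOnline.sum_inner_eq_zero [DecidableEq ι] {alg : ι → (ι → E) → E}
    (h_alg : IsOnline alg) (v : ι → E) (t : ι) :
    ∑ x : SignCube ι, ⟪x t • v t, alg t fun i => x i • v i⟫ = 0 := by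
  refine SignCube.sum_eq_zero_of_flip_eq_neg (i := t) fun x => ?_
  have alg_flip : alg t (fun i => SignCube.flip t x i • v i) = alg t fun i => x i • v i :=
    h_alg _ _ _ fun i hi => by rw [SignCube.flip_apply_of_ne hi.ne]
  rw [alg_flip, SignCube.flip_apply_self, Units.neg_smul, inner_neg_left]

theorem IsOnline.exists_signs_le_max_weightedRegret {alg : ι → (ι → E) → E}
    (h_alg : IsOnline alg) (w : ι → ℝ) (v : ι → E) (u : E) :
    ∃ x : SignCube ι, √((∑ t, (w t * ⟪v t, u⟫) ^ 2) / 2) ≤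
      max (weightedRegret w (fun t => x t • v t) (fun t => alg t fun i => x i • v i) u)
        (weightedRegret w (fun t => x t • v t) (fun t => alg t fun i => x i • v i) (-u)) := by
  classical
  have loss_sum : ∑ x : SignCube ι, ∑ t, w t * ⟪x t • v t, alg t fun i => x i • v i⟫ = 0 := by
    rw [Finset.sum_comm]
    simp only [← Finset.mul_sum, h_alg.sum_inner_eq_zero, mul_zero, Finset.sum_const_zero]
  have comparator (x : SignCube ι) :
      |∑ t, w t * ⟪x t • v t, u⟫| = ‖∑ t, x t • (w t * ⟪v t, u⟫)‖ := by
    simp [Units.smul_def, inner_smul_left_eq_smul, mul_left_comm]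
  suffices h : ∑ _x : SignCube ι, √((∑ t, (w t * ⟪v t, u⟫) ^ 2) / 2) ≤
      ∑ x : SignCube ι, (∑ t, w t * ⟪x t • v t, alg t fun i => x i • v i⟫ +
        |∑ t, w t * ⟪x t • v t, u⟫|) by
    simp only [max_weightedRegret_neg]
    obtain ⟨x, -, hx⟩ := Finset.exists_le_of_sum_le Finset.univ_nonempty h
    exact ⟨x, hx⟩
  rw [Finset.sum_add_distrib, loss_sum, zero_add]
  simp only [comparator]
  simpa only [Real.norm_eq_abs, sq_abs, Finset.sum_const, Finset.card_univ, SignCube.card_eq,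
    nsmul_eq_mul, Nat.cast_pow, Nat.cast_ofNat] using SignCube.khintchine fun t => w t * ⟪v t, u⟫

theorem IsOnline.exists_norm_eq_le_max_weightedRegret {alg : ι → (ι → E) → E}
    (h_alg : IsOnline alg) (w : ι → ℝ) {r : ι → ℝ} (hr : ∀ t, 0 ≤ r t) {u : E} (hu : ‖u‖ ≠ 0) :
    ∃ g : ι → E, (∀ t, ‖g t‖ = r t) ∧ ‖u‖ * √((∑ t, (w t * r t) ^ 2) / 2) ≤
      max (weightedRegret w g (fun t => alg t g) u)
        (weightedRegret w g (fun t => alg t g) (-u)) := by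
  obtain ⟨x, hx⟩ := h_alg.exists_signs_le_max_weightedRegret w (fun t => (r t / ‖u‖) • u) u
  refine ⟨fun t => x t • (r t / ‖u‖) • u, fun t => ?_, le_of_eq_of_le ?_ hx⟩
  · rw [norm_units_zsmul, norm_smul, norm_div, norm_norm, Real.norm_of_nonneg (hr t),
      div_mul_cancel₀ _ hu]
  · have inner_eq (t : ι) : ⟪(r t / ‖u‖) • u, u⟫ = r t * ‖u‖ := by
      rw [real_inner_smul_left, real_inner_self_eq_norm_sq]
      field_simp
    have sum_eq : (∑ t, (w t * ⟪(r t / ‖u‖) • u, u⟫) ^ 2) / 2 =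
        ‖u‖ ^ 2 * ((∑ t, (w t * r t) ^ 2) / 2) := by
      simp only [inner_eq, ← mul_assoc, mul_pow _ ‖u‖, ← Finset.sum_mul]
      ring
    rw [sum_eq, Real.sqrt_mul (sq_nonneg _), Real.sqrt_sq (norm_nonneg u)]

end WeightedRegret

lemma exists_sq_mul_eq_of_le {G H V : ℝ} (hG : 0 ≤ G) (hV : 0 ≤ V) (hVH : V ≤ G ^ 2 * H) :
    ∃ s, 0 ≤ s ∧ s ≤ G ∧ s ^ 2 * H = V := by
  have h_cont : ContinuousOn (fun s : ℝ => s ^ 2 * H) (Set.Icc 0 G) := by fun_prop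
  obtain ⟨s, ⟨hs, hsG⟩, hsV⟩ := intermediate_value_Icc hG h_cont ⟨by simpa using hV, hVH⟩
  exact ⟨s, hs, hsG, hsV⟩

lemma isOnline_extend {E : Type*} [Zero E] (T : ℕ) {alg : ℕ → (ℕ → E) → E}
    (hcausal : ∀ t g₁ g₂, (∀ i, 1 ≤ i → i ≤ t - 1 → g₁ i = g₂ i) → alg t g₁ = alg t g₂) :
    IsOnline fun (t : Finset.Icc 1 T) (g : Finset.Icc 1 T → E) =>
      alg t (Function.extend Subtype.val g 0) := by
  intro t g₁ g₂ h
  refine hcausal _ _ _ fun i h_one h_le => ?_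
  obtain ⟨t_pos, t_le⟩ := Finset.mem_Icc.1 t.2
  lift i to Finset.Icc 1 T using Finset.mem_Icc.2 ⟨h_one, by omega⟩
  rw [Subtype.val_injective.extend_apply, Subtype.val_injective.extend_apply]
  exact h i (Subtype.coe_lt_coe.1 (by omega))

theorem discounted_regret_lower_bound_general {E : Type*} [NormedAddCommGroup E]
    [InnerProductSpace ℝ E] (T : ℕ) (w : ℕ → ℝ) {G V : ℝ} (hG : 0 ≤ G) (hV : 0 ≤ V)
    (hVG : V ≤ G ^ 2 * ∑ t ∈ Finset.Icc 1 T, w t ^ 2) {u : E} (hu : u ≠ 0)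
    {alg : ℕ → (ℕ → E) → E}
    (hcausal : ∀ t g₁ g₂, (∀ i, 1 ≤ i → i ≤ t - 1 → g₁ i = g₂ i) → alg t g₁ = alg t g₂) :
    ∃ g : ℕ → E,
      (∀ t ∈ Finset.Icc 1 T, ‖g t‖ ≤ G) ∧
      ∑ t ∈ Finset.Icc 1 T, w t ^ 2 * ‖g t‖ ^ 2 = V ∧
      1 / √2 * ‖u‖ * √V ≤
        max (∑ t ∈ Finset.Icc 1 T, w t * (⟪g t, alg t g⟫ - ⟪g t, u⟫))
          (∑ t ∈ Finset.Icc 1 T, w t * (⟪g t, alg t g⟫ - ⟪g t, -u⟫)) := by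
  obtain ⟨s, hs, hsG, hsV⟩ := exists_sq_mul_eq_of_le hG hV hVG
  obtain ⟨f, norm_f, le_regret⟩ :=
    (isOnline_extend T hcausal).exists_norm_eq_le_max_weightedRegret
      (fun t => w t) (r := fun _ => s) (fun _ => hs) (norm_ne_zero_iff.2 hu)
  set g : ℕ → E := Function.extend Subtype.val f 0
  have g_apply (t : Finset.Icc 1 T) : g t = f t := Subtype.val_injective.extend_apply _ _ _
  have norm_g {t : ℕ} (ht : t ∈ Finset.Icc 1 T) : ‖g t‖ = s := by
    rw [g_apply ⟨t, ht⟩, norm_f]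
  have regret_eq (v : E) : weightedRegret (fun t : Finset.Icc 1 T => w t) f (fun t => alg t g) v =
      ∑ t ∈ Finset.Icc 1 T, w t * (⟪g t, alg t g⟫ - ⟪g t, v⟫) := by
    rw [← Finset.sum_coe_sort]
    simp only [weightedRegret, g_apply]
  have variance_eq : ∑ t : Finset.Icc 1 T, (w t * s) ^ 2 = V := by
    rw [Finset.sum_coe_sort (Finset.Icc 1 T) fun t => (w t * s) ^ 2, ← hsV, mul_comm,
      Finset.sum_mul]
    simp only [mul_pow]
  refine ⟨g, fun t ht => (norm_g ht).trans_le hsG, ?_, ?_⟩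
  · rw [Finset.sum_congr rfl fun t ht => by rw [norm_g ht], ← Finset.sum_mul, mul_comm, hsV]
  · rw [← regret_eq, ← regret_eq]
    refine le_of_eq_of_le ?_ le_regret
    rw [variance_eq, Real.sqrt_div hV]
    ring

/-- Instance-dependent lower bound on the discounted regret: for any online
algorithm there exist linear losses with prescribed discounted gradient variance `V` such that
the regret against `u` or `−u` is at least `(1/√2)·‖u‖·√V`. -/
theorem discounted_regret_lower_bound
    (d T : ℕ) (hT : 1 ≤ T)
    (X : Set (EuclideanSpace ℝ (Fin d))) (hXclosed : IsClosed X) (hXconvex : Convex ℝ X)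
    (lam : ℕ → ℝ) (hlam : ∀ i, 0 < lam i)
    (G : ℝ) (hG : 0 < G)
    (H : ℝ) (hH : H = ∑ i ∈ Finset.Icc 1 T, ∏ j ∈ Finset.Icc i (T-1), (lam j)^2)
    (V : ℝ) (hV0 : 0 < V) (hVH : V ≤ G^2 * H)
    (u : EuclideanSpace ℝ (Fin d)) (hu0 : u ≠ 0) (huX : u ∈ X) (hunegX : -u ∈ X)
    (alg : ℕ → (ℕ → EuclideanSpace ℝ (Fin d)) → EuclideanSpace ℝ (Fin d))
    (halgX : ∀ t gseq, alg t gseq ∈ X)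
    (hcausal : ∀ t g₁ g₂, (∀ i, 1 ≤ i → i ≤ t - 1 → g₁ i = g₂ i) → alg t g₁ = alg t g₂) :
    ∃ g : ℕ → EuclideanSpace ℝ (Fin d),
      (∀ t ∈ Finset.Icc 1 T, ‖g t‖ ≤ G) ∧
      (∑ t ∈ Finset.Icc 1 T, (∏ i ∈ Finset.Icc t (T-1), (lam i)^2) * ‖g t‖^2 = V) ∧
      (1 / Real.sqrt 2) * ‖u‖ * Real.sqrt V ≤
        max (∑ t ∈ Finset.Icc 1 T, (∏ i ∈ Finset.Icc t (T-1), lam i) *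
                (⟪g t, alg t g⟫ - ⟪g t, u⟫))
            (∑ t ∈ Finset.Icc 1 T, (∏ i ∈ Finset.Icc t (T-1), lam i) *
                (⟪g t, alg t g⟫ - ⟪g t, -u⟫)) := by
  simp only [Finset.prod_pow] at hH ⊢
  exact discounted_regret_lower_bound_general T _ hG.le hV0.le (hH ▸ hVH) hu0 hcausal
end

section
/- Let ε > 0, let λ_t ∈ (0,∞) for t ≥ 0 with λ_0 := 1, and consider the 1D FTRL-based magnitude learner on [0,∞): initialize v_1 = s_1 = h_1 = 0; in round t, if h_t = 0 set x̃_t = 0, otherwise set x̃_t = ε·erfi( s_t / (2√(v_t + 2h_t s_t + 16h_t²)) ) − ε·h_t/√(v_t + 2h_t s_t + 16h_t²) · exp( s_t² / (4(v_t + 2h_t s_t + 16h_t²)) ), where erfi(x) := ∫₀ˣ exp(u²) du; predict x_t = max(x̃_t, 0); receive a subgradient g_t ∈ ∂l_t(x_t) of a convex loss l_t on [0,∞); set g_{t,clip} = the projection of g_t onto [−λ_{t-1}h_t, λ_{t-1}h_t] and h_{t+1} = max(λ_{t-1}h_t, |g_t|); set g̃_{t,clip} = 0 if g_{t,clip}·x̃_t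 < g_{t,clip}·x_t and g̃_{t,clip} = g_{t,clip} otherwise; update v_{t+1} = λ_{t-1}²·v_t + g̃_{t,clip}² and s_{t+1} = λ_{t-1}·s_t − g̃_{t,clip}. Then for all T ∈ ℕ_+, all convex losses l_{1:T} on [0,∞), all comparators u ∈ [0,∞), and all stability window lengths τ ∈ [1:T]: Reg_T := Σ_{t=1}^T (∏_{i=t}^{T-1} λ_i)·[l_t(x_t) − l_t(u)] ≤ ε·√(V_T + 2·G_T·S + 16·G_T²) + u·(S + G_T) + (max_{t∈[T−τ+1:T]} x_t)·G_T + (∏_{t=T−τ}^{T-1} λ_t)·(max_{t∈[1:T−τ]} x_t)·G_{T−τ}, where S = 8·G_T·(1 + √(log(2u·ε^{-1} + 1)))² + 2·√(V_T + 16·G_T²)·(1 + √(log(2u·ε^{-1} + 1))), and the last term is zero when τ = T (maximum over the empty set is 0 and G_0 := 0). -/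
open scoped BigOperators

/-- The (rescaled) imaginary error function `erfi(x) = ∫₀ˣ exp(u²) du`. -/
noncomputable def erfi (x : ℝ) : ℝ := ∫ u in (0:ℝ)..x, Real.exp (u^2)

/-!
The potential `Ψ(q, s) = s · erfi (s / 2q) - q · exp ((s / 2q)²)` has `∂ₛΨ = erfi (s / 2q)` and
`∂_qΨ = -exp ((s / 2q)²)`. Hence, with `q² = v + 2hs + 16h²`, the prediction `x̃` is `ε` times the
derivative at `c = 0` of the potential in the state `(v + c², h, s + c)`. As a function of `c` this
potential is concave for `|c| ≤ h`, `s + c ≥ -h`, so feeding in a clipped gradient `c = -g̃` raises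
it by at most `-g̃ · x̃ / ε`; raising `h` only lowers it, and homogeneity absorbs the discount.
Summing up, the clipped linear regret is at most `u · s - ε · Ψ(q, s)`, which is bounded using
`Ψ ≥ -q` when `s ≤ S` and `ε · Ψ ≥ u · s` when `s > S`.

Replacing `g_t` by its clipped version costs at most `(G_t - λ_{t-1} G_{t-1}) (x_t + u)`. These
increments telescope under discounting, with `x_t` replaced by its maximum separately on the last
`τ` rounds and before them.
-/

open Real Set

lemma hasDerivAt_erfi (x : ℝ) : HasDerivAt erfi (exp (x ^ 2)) x :=
  (by fun_prop : Continuous fun u : ℝ => exp (u ^ 2)).integral_hasStrictDerivAt 0 x |>.hasDerivAt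

@[simp]
lemma erfi_zero : erfi 0 = 0 := by simp [erfi]

lemma erfi_neg (x : ℝ) : erfi (-x) = -erfi x := by
  have hcomp := intervalIntegral.integral_comp_neg (fun u : ℝ => exp (u ^ 2)) (a := 0) (b := x)
  simp only [even_two.neg_pow, neg_zero] at hcomp
  rw [erfi, erfi, hcomp, intervalIntegral.integral_symm]

lemma monotone_erfi : Monotone erfi :=
  monotone_of_hasDerivAt_nonneg hasDerivAt_erfi fun _ => (exp_pos _).le

lemma self_le_erfi {x : ℝ} (hx : 0 ≤ x) : x ≤ erfi x := by
  have hmono : Monotone fun y => erfi y - y :=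
    monotone_of_hasDerivAt_nonneg (fun y => (hasDerivAt_erfi y).sub (hasDerivAt_id y))
      fun y => sub_nonneg.2 (one_le_exp (sq_nonneg y))
  simpa using hmono hx

lemma exp_sq_add_sq_sub_one_le_mul_erfi (w : ℝ) : exp (w ^ 2) + w ^ 2 - 1 ≤ 2 * w * erfi w := by
  wlog hw : 0 ≤ w generalizing w
  · simpa [erfi_neg] using this (-w) (by linarith)
  have hderiv (x : ℝ) :
      HasDerivAt (fun y => 2 * y * erfi y - exp (y ^ 2) - y ^ 2) (2 * (erfi x - x)) x := by
    refine (((((hasDerivAt_id x).const_mul 2).mul (hasDerivAt_erfi x)).sub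
      (hasDerivAt_pow 2 x).exp).sub (hasDerivAt_pow 2 x)).congr_deriv ?_
    simp only [Nat.cast_ofNat, Nat.add_one_sub_one, pow_one, id]
    ring
  have hmono : MonotoneOn (fun y => 2 * y * erfi y - exp (y ^ 2) - y ^ 2) (Ici 0) :=
    monotoneOn_of_hasDerivWithinAt_nonneg (convex_Ici 0)
      (fun x _ => (hderiv x).continuousAt.continuousWithinAt)
      (fun x _ => (hderiv x).hasDerivWithinAt)
      fun x hx => by linarith [self_le_erfi (interior_subset hx : 0 ≤ x)]
  have := hmono self_mem_Ici hw hw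
  norm_num at this
  linarith

lemma two_mul_add_one_sq_mul_le_exp {b : ℝ} (hb : 0 ≤ b) :
    2 * (b + 1) ^ 2 * b ≤ exp (2 * b + 1) := by
  refine le_trans ?_ (sum_le_exp_of_nonneg (x := 2 * b + 1) (by linarith) 5)
  simp only [Finset.sum_range_succ, Finset.sum_range_zero, Nat.factorial]
  norm_num
  nlinarith [pow_nonneg hb 2, pow_nonneg hb 3, pow_nonneg hb 4]

lemma exp_sq_add_mul_exp_sub_one_sq_le_mul_erfi {w : ℝ} (hw : 1 ≤ w) :
    exp (w ^ 2) + w * (exp ((w - 1) ^ 2) - 1) ≤ 2 * w * erfi w := by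
  have hderiv (x : ℝ) (hx : 0 < x) :
      HasDerivAt (fun y => 2 * erfi y - exp (y ^ 2) / y - exp ((y - 1) ^ 2))
        (exp (x ^ 2) / x ^ 2 - exp ((x - 1) ^ 2) * (2 * (x - 1))) x := by
    refine ((((hasDerivAt_erfi x).const_mul 2).sub
      ((hasDerivAt_pow 2 x).exp.div (hasDerivAt_id x) hx.ne')).sub
      (((hasDerivAt_id x).sub_const 1).pow 2).exp).congr_deriv ?_
    simp only [Nat.cast_ofNat, Nat.add_one_sub_one, pow_one, Pi.pow_apply, id]
    field_simp
    ring
  have hderiv_nonneg (x : ℝ) (hx : 1 ≤ x) :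
      0 ≤ exp (x ^ 2) / x ^ 2 - exp ((x - 1) ^ 2) * (2 * (x - 1)) := by
    have hfactor : exp (x ^ 2) = exp ((x - 1) ^ 2) * exp (2 * (x - 1) + 1) := by
      rw [← exp_add]
      ring_nf
    rw [sub_nonneg, le_div_iff₀ (by positivity), hfactor, mul_assoc]
    gcongr
    linarith [two_mul_add_one_sq_mul_le_exp (sub_nonneg.2 hx)]
  have hmono : MonotoneOn (fun y => 2 * erfi y - exp (y ^ 2) / y - exp ((y - 1) ^ 2)) (Ici 1) :=
    monotoneOn_of_hasDerivWithinAt_nonneg (convex_Ici 1)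
      (fun x hx => (hderiv x (one_pos.trans_le hx)).continuousAt.continuousWithinAt)
      (fun x hx => (hderiv x (one_pos.trans_le (interior_subset hx))).hasDerivWithinAt)
      fun x hx => hderiv_nonneg x (interior_subset hx)
  have hw₀ : 0 < w := one_pos.trans_le hw
  have hone : exp 1 ≤ 2 * erfi 1 := by simpa using exp_sq_add_sq_sub_one_le_mul_erfi 1
  have hcmp := hmono self_mem_Ici hw hw
  norm_num at hcmp
  have hdiv : exp (w ^ 2) / w + (exp ((w - 1) ^ 2) - 1) ≤ 2 * erfi w := by linarith
  calc exp (w ^ 2) + w * (exp ((w - 1) ^ 2) - 1)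
      = w * (exp (w ^ 2) / w + (exp ((w - 1) ^ 2) - 1)) := by
        rw [mul_add, mul_div_cancel₀ _ hw₀.ne']
    _ ≤ w * (2 * erfi w) := by gcongr
    _ = 2 * w * erfi w := by ring

/-! ### The erfi potential -/

/-- The Legendre-type potential `s · erfi (s / 2q) - q · exp ((s / 2q)²)` of the learner, as a
function of the scale `q` (the square root of the paper's regularized variance) and of the
negated gradient sum `s`. -/
noncomputable def erfiPotential (q s : ℝ) : ℝ :=
  s * erfi (s / (2 * q)) - q * exp ((s / (2 * q)) ^ 2)

/-- The derivative of `erfiPotential` along a path on which `s` has speed `1` and `q` has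
speed `r`. -/
noncomputable def erfiPotentialSlope (r q s : ℝ) : ℝ :=
  erfi (s / (2 * q)) - r * exp ((s / (2 * q)) ^ 2)

lemma erfiPotential_mul_mul {a : ℝ} (ha : a ≠ 0) (q s : ℝ) :
    erfiPotential (a * q) (a * s) = a * erfiPotential q s := by
  rw [erfiPotential, erfiPotential, mul_left_comm 2 a q, mul_div_mul_left _ _ ha]
  ring

lemma erfiPotentialSlope_mul_mul {a : ℝ} (ha : a ≠ 0) (r q s : ℝ) :
    erfiPotentialSlope r (a * q) (a * s) = erfiPotentialSlope r q s := by
  rw [erfiPotentialSlope, erfiPotentialSlope, mul_left_comm 2 a q, mul_div_mul_left _ _ ha]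

lemma neg_erfiPotential_le {q : ℝ} (hq : 0 ≤ q) (s : ℝ) : -erfiPotential q s ≤ q := by
  rcases hq.eq_or_lt with rfl | hq
  · simp [erfiPotential]
  have hlower : exp ((s / (2 * q)) ^ 2) - 1 ≤ 2 * (s / (2 * q)) * erfi (s / (2 * q)) := by
    linarith [exp_sq_add_sq_sub_one_le_mul_erfi (s / (2 * q)), sq_nonneg (s / (2 * q))]
  have hscale : q * (2 * (s / (2 * q)) * erfi (s / (2 * q))) = s * erfi (s / (2 * q)) := by
    field_simp
  rw [erfiPotential]
  linarith [mul_le_mul_of_nonneg_left hlower hq.le]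

lemma erfiPotentialSlope_neg {r q s : ℝ} (hr : 0 < r) (hq : 0 ≤ q) (hs : s ≤ 0) :
    erfiPotentialSlope r q s < 0 := by
  have herfi : erfi (s / (2 * q)) ≤ 0 := by
    simpa using monotone_erfi (div_nonpos_of_nonpos_of_nonneg hs (by positivity : 0 ≤ 2 * q))
  have := mul_pos hr (exp_pos ((s / (2 * q)) ^ 2))
  rw [erfiPotentialSlope]
  linarith

lemma hasDerivAt_div_two_mul {q s : ℝ → ℝ} {q' s' c : ℝ} (hq : HasDerivAt q q' c)
    (hs : HasDerivAt s s' c) (hqc : q c ≠ 0) :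
    HasDerivAt (fun y => s y / (2 * q y)) ((s' - 2 * q' * (s c / (2 * q c))) / (2 * q c)) c := by
  refine (hs.div (hq.const_mul 2) (by simpa using hqc)).congr_deriv ?_
  field_simp

lemma hasDerivAt_erfiPotential_comp {q s : ℝ → ℝ} {q' s' c : ℝ} (hq : HasDerivAt q q' c)
    (hs : HasDerivAt s s' c) (hqc : q c ≠ 0) :
    HasDerivAt (fun y => erfiPotential (q y) (s y))
      (s' * erfi (s c / (2 * q c)) - q' * exp ((s c / (2 * q c)) ^ 2)) c := by
  have hw := hasDerivAt_div_two_mul hq hs hqc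
  refine ((hs.mul ((hasDerivAt_erfi _).comp c hw)).sub (hq.mul (hw.pow 2).exp)).congr_deriv ?_
  simp only [Nat.cast_ofNat, Nat.add_one_sub_one, pow_one, Pi.pow_apply, Function.comp_apply]
  field_simp
  ring

lemma hasDerivAt_erfiPotentialSlope_comp {r q s : ℝ → ℝ} {r' q' s' c : ℝ}
    (hr : HasDerivAt r r' c) (hq : HasDerivAt q q' c) (hs : HasDerivAt s s' c) (hqc : q c ≠ 0) :
    HasDerivAt (fun y => erfiPotentialSlope (r y) (q y) (s y))
      (exp ((s c / (2 * q c)) ^ 2) * ((s' - 2 * q' * (s c / (2 * q c)))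
        * (1 - 2 * r c * (s c / (2 * q c))) / (2 * q c) - r')) c := by
  have hw := hasDerivAt_div_two_mul hq hs hqc
  refine (((hasDerivAt_erfi _).comp c hw).sub (hr.mul (hw.pow 2).exp)).congr_deriv ?_
  simp only [Nat.cast_ofNat, Nat.add_one_sub_one, pow_one, Pi.pow_apply]
  field_simp
  ring

lemma antitoneOn_erfiPotential (s : ℝ) : AntitoneOn (fun q => erfiPotential q s) (Ioi 0) := by
  have hderiv (q : ℝ) (hq : q ∈ Ioi 0) :=
    hasDerivAt_erfiPotential_comp (hasDerivAt_id q) (hasDerivAt_const q s) (ne_of_gt hq)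
  refine antitoneOn_of_hasDerivWithinAt_nonpos (convex_Ioi 0)
    (fun q hq => (hderiv q hq).continuousAt.continuousWithinAt)
    (fun q hq => (hderiv q (interior_subset hq)).hasDerivWithinAt) fun q _ => ?_
  simpa using (exp_pos _).le

lemma mul_le_erfiPotential {eps u q s : ℝ} (heps : 0 < eps) (hu : 0 ≤ u) (hq : 0 < q)
    (hs : 2 * q * (1 + √(log (2 * u * eps⁻¹ + 1))) ≤ s) : u * s ≤ eps * erfiPotential q s := by
  set w := s / (2 * q) with hw
  have hratio : 0 ≤ 2 * u * eps⁻¹ := by positivity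
  have hsqrt : √(log (2 * u * eps⁻¹ + 1)) ≤ w - 1 := by
    rw [hw, le_sub_iff_add_le', le_div_iff₀ (by positivity)]
    linarith
  have hw₁ : 1 ≤ w := by linarith [sqrt_nonneg (log (2 * u * eps⁻¹ + 1))]
  have hexp : 2 * u * eps⁻¹ ≤ exp ((w - 1) ^ 2) - 1 := by
    have := exp_le_exp.2 ((sqrt_le_left (by linarith)).1 hsqrt)
    rw [exp_log (by linarith)] at this
    linarith
  have hs_eq : s = 2 * w * q := by
    rw [hw]
    field_simp
  calc u * s = eps * q * (w * (2 * u * eps⁻¹)) := by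
        rw [hs_eq]
        field_simp
    _ ≤ eps * q * (w * (exp ((w - 1) ^ 2) - 1)) := by gcongr
    _ ≤ eps * q * (2 * w * erfi w - exp (w ^ 2)) := by
        gcongr
        linarith [exp_sq_add_mul_exp_sub_one_sq_le_mul_erfi hw₁]
    _ = eps * (s * erfi w - q * exp (w ^ 2)) := by
        rw [hs_eq]
        ring
    _ = eps * erfiPotential q s := rfl

lemma le_tangent_of_concaveOn {D : Set ℝ} {f : ℝ → ℝ} {f' x y : ℝ} (hf : ConcaveOn ℝ D f)
    (hx : x ∈ D) (hy : y ∈ D) (hf' : HasDerivAt f f' x) : f y ≤ f x + (y - x) * f' := by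
  rcases lt_trichotomy y x with h | rfl | h
  · have := hf.le_slope_of_hasDerivAt hy hx h hf'
    rw [slope_def_field, le_div_iff₀ (sub_pos.2 h)] at this
    linarith
  · simp
  · have := hf.slope_le_of_hasDerivAt hx hy h hf'
    rw [slope_def_field, div_le_iff₀ (sub_pos.2 h)] at this
    linarith

/-! ### The potential in the state of the learner -/

/-- The paper's `v + 2hs + 16h²`: the clipped gradient variance `v` regularized so that it
dominates `h²` whenever `s ≥ -h`. -/
def regularizedVariance (v h s : ℝ) : ℝ := v + 2 * h * s + 16 * h ^ 2

/-- The potential of the learner in the state `(v, h, s)`, for `ε = 1`. -/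
noncomputable def learnerPotential (v h s : ℝ) : ℝ :=
  erfiPotential (√(regularizedVariance v h s)) s

/-- The prediction `x̃` of the learner in the state `(v, h, s)`, for `ε = 1`. It is the derivative
at `c = 0` of the potential in the state `(v + c², h, s + c)`. -/
noncomputable def learnerPrediction (v h s : ℝ) : ℝ :=
  erfiPotentialSlope (h / √(regularizedVariance v h s)) (√(regularizedVariance v h s)) s

lemma regularizedVariance_mul (a v h s : ℝ) :
    regularizedVariance (a ^ 2 * v) (a * h) (a * s) = a ^ 2 * regularizedVariance v h s := by
  unfold regularizedVariance
  ring

lemma sqrt_regularizedVariance_mul {a : ℝ} (ha : 0 ≤ a) (v h s : ℝ) :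
    √(regularizedVariance (a ^ 2 * v) (a * h) (a * s)) = a * √(regularizedVariance v h s) := by
  rw [regularizedVariance_mul, sqrt_mul (sq_nonneg a), sqrt_sq ha]

lemma sq_le_regularizedVariance {v h s : ℝ} (hv : 0 ≤ v) (hh : 0 ≤ h) (hs : -h ≤ s) :
    h ^ 2 ≤ regularizedVariance v h s := by
  unfold regularizedVariance
  nlinarith [mul_nonneg hh (neg_le_iff_add_nonneg.1 hs)]

lemma regularizedVariance_nonneg {v h s : ℝ} (hv : 0 ≤ v) (hh : 0 ≤ h) (hs : -h ≤ s) :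
    0 ≤ regularizedVariance v h s :=
  (sq_nonneg h).trans (sq_le_regularizedVariance hv hh hs)

lemma regularizedVariance_pos {v h s : ℝ} (hv : 0 ≤ v) (hh : 0 < h) (hs : -h ≤ s) :
    0 < regularizedVariance v h s :=
  (pow_pos hh 2).trans_le (sq_le_regularizedVariance hv hh.le hs)

lemma regularizedVariance_mono_h {h h' s : ℝ} (v : ℝ) (hh : 0 ≤ h) (hhh' : h ≤ h')
    (hs : -h ≤ s) : regularizedVariance v h s ≤ regularizedVariance v h' s := by
  unfold regularizedVariance
  nlinarith [mul_nonneg (sub_nonneg.2 hhh') (by linarith : 0 ≤ 2 * s + 16 * (h' + h))]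

lemma learnerPotential_mul {a : ℝ} (ha : 0 < a) (v h s : ℝ) :
    learnerPotential (a ^ 2 * v) (a * h) (a * s) = a * learnerPotential v h s := by
  rw [learnerPotential, sqrt_regularizedVariance_mul ha.le, erfiPotential_mul_mul ha.ne',
    learnerPotential]

lemma learnerPrediction_mul {a : ℝ} (ha : 0 < a) (v h s : ℝ) :
    learnerPrediction (a ^ 2 * v) (a * h) (a * s) = learnerPrediction v h s := by
  rw [learnerPrediction, sqrt_regularizedVariance_mul ha.le, mul_div_mul_left _ _ ha.ne',
    erfiPotentialSlope_mul_mul ha.ne', learnerPrediction]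

lemma learnerPotential_antitone_h {v h h' s : ℝ} (hv : 0 ≤ v) (hh : 0 < h) (hhh' : h ≤ h')
    (hs : -h ≤ s) : learnerPotential v h' s ≤ learnerPotential v h s := by
  have hpos := sqrt_pos.2 (regularizedVariance_pos hv hh hs)
  have hle := sqrt_le_sqrt (regularizedVariance_mono_h v hh.le hhh' hs)
  exact antitoneOn_erfiPotential s hpos (hpos.trans_le hle) hle

lemma hasDerivAt_sqrt_regularizedVariance {v h s c : ℝ}
    (hpos : 0 < regularizedVariance (v + c ^ 2) h (s + c)) :
    HasDerivAt (fun y => √(regularizedVariance (v + y ^ 2) h (s + y)))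
      ((h + c) / √(regularizedVariance (v + c ^ 2) h (s + c))) c := by
  have hvar : HasDerivAt (fun y => regularizedVariance (v + y ^ 2) h (s + y))
      (2 * (h + c)) c := by
    refine ((((hasDerivAt_pow 2 c).const_add v).add
      (((hasDerivAt_id c).const_add s).const_mul (2 * h))).add_const (16 * h ^ 2)).congr_deriv ?_
    simp only [Nat.cast_ofNat, Nat.add_one_sub_one, pow_one]
    ring
  refine (hvar.sqrt hpos.ne').congr_deriv ?_
  rw [mul_div_mul_left _ _ two_ne_zero]

lemma hasDerivAt_learnerPotential {v h s c : ℝ}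
    (hpos : 0 < regularizedVariance (v + c ^ 2) h (s + c)) :
    HasDerivAt (fun y => learnerPotential (v + y ^ 2) h (s + y))
      (erfiPotentialSlope ((h + c) / √(regularizedVariance (v + c ^ 2) h (s + c)))
        (√(regularizedVariance (v + c ^ 2) h (s + c))) (s + c)) c :=
  (hasDerivAt_erfiPotential_comp (hasDerivAt_sqrt_regularizedVariance hpos)
    ((hasDerivAt_id c).const_add s) (sqrt_pos.2 hpos).ne').congr_deriv
    (by rw [one_mul, erfiPotentialSlope]; rfl)

lemma hasDerivAt_learnerPotential_deriv {v h s c : ℝ}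
    (hpos : 0 < regularizedVariance (v + c ^ 2) h (s + c)) :
    HasDerivAt (fun y => erfiPotentialSlope
        ((h + y) / √(regularizedVariance (v + y ^ 2) h (s + y)))
        (√(regularizedVariance (v + y ^ 2) h (s + y))) (s + y))
      (exp (((s + c) / (2 * √(regularizedVariance (v + c ^ 2) h (s + c)))) ^ 2)
        / (2 * √(regularizedVariance (v + c ^ 2) h (s + c)))
        * ((1 - (h + c) * (s + c) / regularizedVariance (v + c ^ 2) h (s + c)) ^ 2
          + 2 * (h + c) ^ 2 / regularizedVariance (v + c ^ 2) h (s + c) - 2)) c := by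
  have hq := hasDerivAt_sqrt_regularizedVariance hpos
  have hr := ((hasDerivAt_id c).const_add h).div hq (sqrt_pos.2 hpos).ne'
  refine (hasDerivAt_erfiPotentialSlope_comp hr hq ((hasDerivAt_id c).const_add s)
    (sqrt_pos.2 hpos).ne').congr_deriv ?_
  obtain ⟨q, hq_pos, hq_sq⟩ :
      ∃ q, 0 < q ∧ regularizedVariance (v + c ^ 2) h (s + c) = q ^ 2 :=
    ⟨_, sqrt_pos.2 hpos, (sq_sqrt hpos.le).symm⟩
  simp only [hq_sq, sqrt_sq hq_pos.le, Pi.div_apply, id]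
  field_simp
  ring

lemma one_sub_div_sq_add_le_two {h k σ Z : ℝ} (hh : 0 < h) (hk : 0 ≤ k) (hkh : k ≤ 2 * h)
    (hσ : -h ≤ σ) (hZ : 16 * h ^ 2 + 2 * h * σ ≤ Z) :
    (1 - k * σ / Z) ^ 2 + 2 * k ^ 2 / Z ≤ 2 := by
  have hk_sq : k ^ 2 ≤ 4 * h ^ 2 := by nlinarith
  have hZ_low : 14 * h ^ 2 ≤ Z := by nlinarith
  have hZ_pos : 0 < Z := lt_of_lt_of_le (by positivity) hZ_low
  rcases le_total 0 σ with hσ₀ | hσ₀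
  · have hvar : 2 * k ^ 2 / Z ≤ 1 := by
      rw [div_le_one hZ_pos]
      nlinarith
    have hle : k * σ / Z ≤ 1 := by
      rw [div_le_one hZ_pos]
      nlinarith
    have hnonneg : 0 ≤ k * σ / Z := by positivity
    nlinarith
  · have hvar : 2 * k ^ 2 / Z ≤ 4 / 7 := by
      rw [div_le_iff₀ hZ_pos]
      nlinarith
    have hlow : -(1 / 7) ≤ k * σ / Z := by
      rw [le_div_iff₀ hZ_pos]
      nlinarith [mul_nonneg hk (neg_le_iff_add_nonneg.1 hσ)]
    have hnonpos : k * σ / Z ≤ 0 :=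
      div_nonpos_of_nonpos_of_nonneg (mul_nonpos_of_nonneg_of_nonpos hk hσ₀) hZ_pos.le
    nlinarith

lemma concaveOn_learnerPotential {v h s : ℝ} (hv : 0 ≤ v) (hh : 0 < h) :
    ConcaveOn ℝ (Icc (max (-h) (-h - s)) h)
      (fun c => learnerPotential (v + c ^ 2) h (s + c)) := by
  have hpos (c : ℝ) (hc : c ∈ Icc (max (-h) (-h - s)) h) :
      0 < regularizedVariance (v + c ^ 2) h (s + c) :=
    regularizedVariance_pos (by positivity) hh (by linarith [(max_le_iff.1 hc.1).2])
  refine concaveOn_of_hasDerivWithinAt2_nonpos (convex_Icc _ _)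
    (fun c hc => (hasDerivAt_learnerPotential (hpos c hc)).continuousAt.continuousWithinAt)
    (fun c hc => (hasDerivAt_learnerPotential (hpos c (interior_subset hc))).hasDerivWithinAt)
    (fun c hc =>
      (hasDerivAt_learnerPotential_deriv (hpos c (interior_subset hc))).hasDerivWithinAt)
    fun c hc => mul_nonpos_of_nonneg_of_nonpos (by positivity) (sub_nonpos.2 ?_)
  obtain ⟨hlow, hch⟩ := interior_subset hc
  obtain ⟨hc₁, hc₂⟩ := max_le_iff.1 hlow
  refine one_sub_div_sq_add_le_two hh (by linarith) (by linarith) (by linarith) ?_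
  unfold regularizedVariance
  linarith [sq_nonneg c]

lemma learnerPotential_add_le {v h s c : ℝ} (hv : 0 ≤ v) (hh : 0 < h) (hs : -h ≤ s)
    (hc : |c| ≤ h) (hsc : -h ≤ s + c) :
    learnerPotential (v + c ^ 2) h (s + c)
      ≤ learnerPotential v h s + c * learnerPrediction v h s := by
  obtain ⟨hc₁, hc₂⟩ := abs_le.1 hc
  have hderiv := hasDerivAt_learnerPotential (v := v) (h := h) (s := s) (c := 0)
    (regularizedVariance_pos (by positivity) hh (by simpa using hs))
  simpa [learnerPrediction] using le_tangent_of_concaveOn (concaveOn_learnerPotential hv hh)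
    (⟨max_le (by linarith) (by linarith), hh.le⟩ : (0 : ℝ) ∈ Icc (max (-h) (-h - s)) h)
    ⟨max_le hc₁ (by linarith), hc₂⟩ hderiv

lemma learnerPotential_update_le {a v h h' s γ : ℝ} (ha : 0 < a) (hv : 0 ≤ v) (hh : 0 < h)
    (hs : -h ≤ s) (hγ : |γ| ≤ a * h) (hsγ : -(a * h) ≤ a * s - γ) (hh' : a * h ≤ h') :
    learnerPotential (a ^ 2 * v + γ ^ 2) h' (a * s - γ)
      ≤ a * learnerPotential v h s - γ * learnerPrediction v h s := by
  have hah : 0 < a * h := mul_pos ha hh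
  calc learnerPotential (a ^ 2 * v + γ ^ 2) h' (a * s - γ)
      ≤ learnerPotential (a ^ 2 * v + γ ^ 2) (a * h) (a * s - γ) :=
        learnerPotential_antitone_h (by positivity) hah hh' hsγ
    _ = learnerPotential (a ^ 2 * v + (-γ) ^ 2) (a * h) (a * s + -γ) := by
        rw [neg_sq, sub_eq_add_neg]
    _ ≤ learnerPotential (a ^ 2 * v) (a * h) (a * s)
          + -γ * learnerPrediction (a ^ 2 * v) (a * h) (a * s) :=
        learnerPotential_add_le (by positivity) hah (by nlinarith) (by rwa [abs_neg])
          (by linarith)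
    _ = a * learnerPotential v h s - γ * learnerPrediction v h s := by
        rw [learnerPotential_mul ha, learnerPrediction_mul ha]
        ring

/-- The paper's `S`: beyond this value of `s`, the potential `ε · erfiPotential` dominates the
linear function `u · s`. -/
noncomputable def comparatorThreshold (eps u V G : ℝ) : ℝ :=
  8 * G * (1 + √(log (2 * u * eps⁻¹ + 1))) ^ 2
    + 2 * √(V + 16 * G ^ 2) * (1 + √(log (2 * u * eps⁻¹ + 1)))

lemma comparatorThreshold_nonneg {G : ℝ} (hG : 0 ≤ G) (eps u V : ℝ) :
    0 ≤ comparatorThreshold eps u V G := by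
  unfold comparatorThreshold
  positivity

lemma two_mul_sqrt_add_mul_le {a b s W : ℝ} (ha : 0 ≤ a) (hb : 0 ≤ b) (hW : 0 ≤ W)
    (hs : 8 * b * a ^ 2 + 2 * √W * a ≤ s) : 2 * √(W + 2 * b * s) * a ≤ s := by
  have hcross : 0 ≤ 2 * √W * a := by positivity
  have hba : 0 ≤ 8 * b * a ^ 2 := by positivity
  have hs₀ : 0 ≤ s := by linarith
  have hprod : (2 * √W * a) * (2 * √W * a) ≤ s * (s - 8 * b * a ^ 2) :=
    mul_le_mul (by linarith) (by linarith) hcross hs₀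
  refine le_of_sq_le_sq ?_ hs₀
  calc (2 * √(W + 2 * b * s) * a) ^ 2
      = (2 * √W * a) * (2 * √W * a) + s * (8 * b * a ^ 2) := by
        linear_combination 4 * a ^ 2 * sq_sqrt (by positivity : 0 ≤ W + 2 * b * s)
          - 4 * a ^ 2 * sq_sqrt hW
    _ ≤ s ^ 2 := by linarith

lemma mul_sub_learnerPotential_le {eps u v V h s : ℝ} (heps : 0 < eps) (hu : 0 ≤ u)
    (hv : 0 ≤ v) (hvV : v ≤ V) (hh : 0 ≤ h) (hs : -h ≤ s) (hs_zero : h = 0 → s = 0) :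
    u * s - eps * learnerPotential v h s
      ≤ eps * √(V + 2 * h * comparatorThreshold eps u V h + 16 * h ^ 2)
        + u * comparatorThreshold eps u V h := by
  have hS₀ : 0 ≤ comparatorThreshold eps u V h := comparatorThreshold_nonneg hh eps u V
  rcases le_or_gt s (comparatorThreshold eps u V h) with hsS | hSs
  · have hvar : regularizedVariance v h s
        ≤ V + 2 * h * comparatorThreshold eps u V h + 16 * h ^ 2 := by
      unfold regularizedVariance
      gcongr
    have hpot := (neg_erfiPotential_le (sqrt_nonneg (regularizedVariance v h s)) s).trans
      (sqrt_le_sqrt hvar)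
    rw [learnerPotential]
    linarith [mul_le_mul_of_nonneg_left hpot heps.le, mul_le_mul_of_nonneg_left hsS hu]
  · have hh_pos : 0 < h := hh.lt_of_ne' fun h₀ => (hS₀.trans_lt hSs).ne' (hs_zero h₀)
    have hscale : √(regularizedVariance v h s) ≤ √(V + 16 * h ^ 2 + 2 * h * s) := by
      refine sqrt_le_sqrt ?_
      unfold regularizedVariance
      linarith
    have hdom : u * s ≤ eps * learnerPotential v h s := by
      refine mul_le_erfiPotential heps hu (sqrt_pos.2 (regularizedVariance_pos hv hh_pos hs)) ?_
      refine le_trans ?_ (two_mul_sqrt_add_mul_le (by positivity) hh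
        (by nlinarith : 0 ≤ V + 16 * h ^ 2) hSs.le)
      gcongr
    have : 0 ≤ eps * √(V + 2 * h * comparatorThreshold eps u V h + 16 * h ^ 2) := by positivity
    linarith [mul_nonneg hu hS₀]

/-! ### Discounted sums and maxima -/

/-- The sum of `a 1, …, a T` in which `a t` is discounted by `λ_t ⋯ λ_{T-1}`. For `t ≤ T` in `ℕ`
with `1 ≤ t`, truncated subtraction makes `Icc t (T - 1)` the interval `[t, T)`. -/
def discountedSum (lam a : ℕ → ℝ) (T : ℕ) : ℝ :=
  ∑ t ∈ Finset.Icc 1 T, (∏ i ∈ Finset.Icc t (T - 1), lam i) * a t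

/-- The maximum of `0` and of `a 1, …, a T`, in which `a t` is discounted by `λ_t ⋯ λ_{T-1}`; the
`0` makes it meaningful at `T = 0`. See `discountedMax_eq_sup'`. -/
noncomputable def discountedMax (lam a : ℕ → ℝ) : ℕ → ℝ
  | 0 => 0
  | n + 1 => max (lam n * discountedMax lam a n) (a (n + 1))

lemma prod_Icc_discount_mul (lam : ℕ → ℝ) (y : ℝ) {t n : ℕ} (ht : t ∈ Finset.Icc 1 n) :
    (∏ i ∈ Finset.Icc t (n + 1 - 1), lam i) * y
      = lam n * ((∏ i ∈ Finset.Icc t (n - 1), lam i) * y) := by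
  obtain ⟨ht₁, htn⟩ := Finset.mem_Icc.1 ht
  obtain ⟨m, rfl⟩ := Nat.exists_eq_add_one.2 (ht₁.trans htn)
  simp only [Nat.add_sub_cancel]
  rw [Finset.prod_Icc_succ_top (by lia), mul_comm _ (lam _), mul_assoc]

lemma discountedSum_zero (lam a : ℕ → ℝ) : discountedSum lam a 0 = 0 := rfl

lemma discountedSum_succ (lam a : ℕ → ℝ) (n : ℕ) :
    discountedSum lam a (n + 1) = lam n * discountedSum lam a n + a (n + 1) := by
  rw [discountedSum, Finset.sum_Icc_succ_top (by lia),
    Finset.sum_congr rfl fun t ht => prod_Icc_discount_mul lam (a t) ht, ← Finset.mul_sum]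
  simp [discountedSum]

lemma discountedSum_add (lam a b : ℕ → ℝ) (T : ℕ) :
    discountedSum lam (fun t => a t + b t) T = discountedSum lam a T + discountedSum lam b T := by
  simp only [discountedSum, mul_add, Finset.sum_add_distrib]

lemma discountedSum_mono {lam a b : ℕ → ℝ} (hlam : ∀ t, 0 ≤ lam t) {T : ℕ}
    (hab : ∀ t ∈ Finset.Icc 1 T, a t ≤ b t) : discountedSum lam a T ≤ discountedSum lam b T :=
  Finset.sum_le_sum fun t ht =>
    mul_le_mul_of_nonneg_left (hab t ht) (Finset.prod_nonneg fun i _ => hlam i)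

lemma discountedSum_le_of_step {lam a Y : ℕ → ℝ} (hlam : ∀ t, 0 ≤ lam t) {N T : ℕ} (hNT : N ≤ T)
    (hinit : discountedSum lam a N ≤ Y N)
    (hstep : ∀ n, N ≤ n → n < T → lam n * Y n + a (n + 1) ≤ Y (n + 1)) :
    discountedSum lam a T ≤ Y T := by
  induction T, hNT using Nat.le_induction with
  | base => exact hinit
  | succ n hNn ih =>
    rw [discountedSum_succ]
    have := mul_le_mul_of_nonneg_left (ih fun m hm hmn => hstep m hm (by lia)) (hlam n)
    linarith [hstep n hNn n.lt_succ_self]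

lemma discountedMax_eq_sup' {lam a : ℕ → ℝ} (hlam : ∀ t, 0 ≤ lam t) (ha : 0 ≤ a 1) {T : ℕ}
    (hT : 1 ≤ T) :
    discountedMax lam a T = (Finset.Icc 1 T).sup' (Finset.nonempty_Icc.2 hT)
      fun i => (∏ j ∈ Finset.Icc i (T - 1), lam j) * a i := by
  induction T, hT using Nat.le_induction with
  | base => simpa [discountedMax] using ha
  | succ n hn ih =>
    rw [discountedMax, ih,
      Finset.mul₀_sup' (hlam n) _ _ (Finset.nonempty_Icc.2 hn),
      ← Finset.sup'_congr (Finset.nonempty_Icc.2 hn) rfl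
        fun i hi => prod_Icc_discount_mul lam (a i) hi, max_comm]
    simp only [← Finset.insert_Icc_right_eq_Icc_add_one (show 1 ≤ n + 1 by lia)]
    rw [Finset.sup'_insert (Finset.nonempty_Icc.2 hn)]
    simp

lemma mul_discountedMax_le (lam a : ℕ → ℝ) (n : ℕ) :
    lam n * discountedMax lam a n ≤ discountedMax lam a (n + 1) :=
  le_max_left _ _

lemma discountedMax_nonneg {lam a : ℕ → ℝ} (hlam : ∀ t, 0 ≤ lam t) (T : ℕ) :
    0 ≤ discountedMax lam a T := by
  induction T with
  | zero => exact le_rfl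
  | succ n ih => exact (mul_nonneg (hlam n) ih).trans (mul_discountedMax_le lam a n)

lemma discountedSum_increment_mul_le {lam G x : ℕ → ℝ} (hlam : ∀ t, 0 ≤ lam t) (hG₀ : G 0 = 0)
    (hG : ∀ n, lam n * G n ≤ G (n + 1)) {M : ℝ} {T : ℕ} (hM : ∀ t ∈ Finset.Icc 1 T, x t ≤ M) :
    discountedSum lam (fun t => (G t - lam (t - 1) * G (t - 1)) * x t) T ≤ M * G T := by
  refine discountedSum_le_of_step (Y := fun n => M * G n) hlam T.zero_le
    (by simp [discountedSum_zero, hG₀]) fun n _ hn => ?_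
  have := mul_le_mul_of_nonneg_left (hM (n + 1) (Finset.mem_Icc.2 ⟨by lia, hn⟩))
    (sub_nonneg.2 (hG n))
  simp only [Nat.add_sub_cancel]
  linarith

lemma discountedSum_increment_mul_le_window {lam G x : ℕ → ℝ} (hlam : ∀ t, 0 ≤ lam t)
    (hG₀ : G 0 = 0) (hG : ∀ n, lam n * G n ≤ G (n + 1)) {M₁ M₂ : ℝ} {N T : ℕ} (hNT : N ≤ T)
    (hGN : 0 ≤ G N) (hM₂₀ : 0 ≤ M₂) (hM₁ : ∀ t ∈ Finset.Icc 1 N, x t ≤ M₁)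
    (hM₂ : ∀ t ∈ Finset.Icc (N + 1) T, x t ≤ M₂) :
    discountedSum lam (fun t => (G t - lam (t - 1) * G (t - 1)) * x t) T
      ≤ M₂ * G T + (∏ t ∈ Finset.Ico N T, lam t) * M₁ * G N := by
  refine discountedSum_le_of_step
    (Y := fun n => M₂ * G n + (∏ t ∈ Finset.Ico N n, lam t) * M₁ * G N) hlam hNT ?_
    fun n hNn hn => ?_
  · have hbefore := discountedSum_increment_mul_le hlam hG₀ hG hM₁
    simp only [Finset.Ico_self, Finset.prod_empty, one_mul]
    linarith [mul_nonneg hM₂₀ hGN]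
  · have := mul_le_mul_of_nonneg_left (hM₂ (n + 1) (Finset.mem_Icc.2 ⟨by lia, hn⟩))
      (sub_nonneg.2 (hG n))
    simp only [Nat.add_sub_cancel, Finset.prod_Ico_succ_top hNn]
    linarith

/-! ### The magnitude learner -/

/-- The projection of `g` onto `[-b, b]`. -/
noncomputable def clip (b g : ℝ) : ℝ := max (-b) (min g b)

lemma abs_clip_le {b : ℝ} (hb : 0 ≤ b) (g : ℝ) : |clip b g| ≤ b :=
  abs_le.2 ⟨le_max_left _ _, max_le (by linarith) (min_le_right _ _)⟩

lemma abs_clip_le_abs {b : ℝ} (hb : 0 ≤ b) (g : ℝ) : |clip b g| ≤ |g| :=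
  abs_le.2 ⟨le_max_of_le_right (le_min (neg_abs_le g) (by linarith [abs_nonneg g])),
    max_le (by linarith [abs_nonneg g]) (min_le_of_left_le (le_abs_self g))⟩

lemma abs_sub_clip_le {b : ℝ} (hb : 0 ≤ b) (g : ℝ) : |g - clip b g| ≤ max b |g| - b := by
  unfold clip
  grind

/-- A run of the one-dimensional magnitude learner (Algorithm 1) on the gradients `g`, without any
relation between `g` and a loss. As in the paper, rounds are numbered from `1`, so round `n + 1`
discounts by `lam n`. The fields `xt`, `gclip`, `gt` are the paper's `x̃`, `g_clip`, `g̃_clip`. -/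
structure IsMagnitudeLearner (eps : ℝ) (lam v s h xt x g gclip gt : ℕ → ℝ) : Prop where
  v_one : v 1 = 0
  s_one : s 1 = 0
  h_one : h 1 = 0
  xt_eq : ∀ t, 1 ≤ t →
    (h t = 0 → xt t = 0) ∧
    (h t ≠ 0 → xt t =
      eps * erfi (s t / (2 * √(regularizedVariance (v t) (h t) (s t))))
      - eps * h t / √(regularizedVariance (v t) (h t) (s t))
        * exp (s t ^ 2 / (4 * regularizedVariance (v t) (h t) (s t))))
  x_eq : ∀ t, 1 ≤ t → x t = max (xt t) 0
  gclip_eq : ∀ t, 1 ≤ t → gclip t = clip (lam (t - 1) * h t) (g t)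
  h_succ : ∀ t, 1 ≤ t → h (t + 1) = max (lam (t - 1) * h t) |g t|
  gt_eq : ∀ t, 1 ≤ t → gt t = if gclip t * xt t < gclip t * x t then 0 else gclip t
  v_succ : ∀ t, 1 ≤ t → v (t + 1) = lam (t - 1) ^ 2 * v t + gt t ^ 2
  s_succ : ∀ t, 1 ≤ t → s (t + 1) = lam (t - 1) * s t - gt t

namespace IsMagnitudeLearner

variable {eps : ℝ} {lam v s h xt x g gclip gt : ℕ → ℝ}

lemma h_add_one (L : IsMagnitudeLearner eps lam v s h xt x g gclip gt) (n : ℕ) :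
    h (n + 1) = discountedMax lam (fun i => |g i|) n := by
  induction n with
  | zero => exact L.h_one
  | succ n ih => rw [L.h_succ (n + 1) n.succ_pos, Nat.add_sub_cancel, ih, discountedMax]

lemma h_nonneg (L : IsMagnitudeLearner eps lam v s h xt x g gclip gt) (hlam : ∀ t, 0 ≤ lam t)
    (n : ℕ) : 0 ≤ h (n + 1) :=
  L.h_add_one n ▸ discountedMax_nonneg hlam n

lemma v_nonneg (L : IsMagnitudeLearner eps lam v s h xt x g gclip gt) (n : ℕ) :
    0 ≤ v (n + 1) := by
  induction n with
  | zero => exact L.v_one.ge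
  | succ n ih =>
    rw [L.v_succ (n + 1) n.succ_pos]
    positivity

lemma mul_h_le (L : IsMagnitudeLearner eps lam v s h xt x g gclip gt) (n : ℕ) :
    lam n * h (n + 1) ≤ h (n + 2) :=
  (le_max_left _ _).trans_eq (L.h_succ (n + 1) n.succ_pos).symm

lemma x_nonneg (L : IsMagnitudeLearner eps lam v s h xt x g gclip gt) (n : ℕ) : 0 ≤ x (n + 1) :=
  (le_max_right _ _).trans_eq (L.x_eq (n + 1) n.succ_pos).symm

lemma gt_eq_zero_or (L : IsMagnitudeLearner eps lam v s h xt x g gclip gt) (n : ℕ) :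
    gt (n + 1) = 0 ∨ gt (n + 1) = clip (lam n * h (n + 1)) (g (n + 1)) := by
  have hclip := L.gclip_eq (n + 1) n.succ_pos
  rw [L.gt_eq (n + 1) n.succ_pos, hclip]
  exact ite_eq_or_eq _ _ _

lemma abs_gt_le (L : IsMagnitudeLearner eps lam v s h xt x g gclip gt) (hlam : ∀ t, 0 ≤ lam t)
    (n : ℕ) : |gt (n + 1)| ≤ lam n * h (n + 1) := by
  have hbound := mul_nonneg (hlam n) (L.h_nonneg hlam n)
  rcases L.gt_eq_zero_or n with hgt | hgt <;> rw [hgt]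
  · simpa using hbound
  · exact abs_clip_le hbound _

lemma gt_sq_le (L : IsMagnitudeLearner eps lam v s h xt x g gclip gt) (hlam : ∀ t, 0 ≤ lam t)
    (n : ℕ) : gt (n + 1) ^ 2 ≤ g (n + 1) ^ 2 := by
  rcases L.gt_eq_zero_or n with hgt | hgt <;> rw [hgt]
  · simpa using sq_nonneg (g (n + 1))
  · exact sq_le_sq.2 (abs_clip_le_abs (mul_nonneg (hlam n) (L.h_nonneg hlam n)) _)

lemma gt_eq_zero (L : IsMagnitudeLearner eps lam v s h xt x g gclip gt) (hlam : ∀ t, 0 ≤ lam t)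
    {n : ℕ} (hh : h (n + 1) = 0) : gt (n + 1) = 0 := by
  simpa [hh] using L.abs_gt_le hlam n

lemma v_le (L : IsMagnitudeLearner eps lam v s h xt x g gclip gt) (hlam : ∀ t, 0 ≤ lam t)
    (n : ℕ) : v (n + 1) ≤ discountedSum (fun i => lam i ^ 2) (fun i => g i ^ 2) n := by
  induction n with
  | zero => exact L.v_one.le
  | succ n ih =>
    rw [L.v_succ (n + 1) n.succ_pos, discountedSum_succ, Nat.add_sub_cancel]
    gcongr ?_ + ?_
    · gcongr
    · exact L.gt_sq_le hlam n

lemma state_eq_zero (L : IsMagnitudeLearner eps lam v s h xt x g gclip gt)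
    (hlam : ∀ t, 0 < lam t) {n : ℕ} (hh : h (n + 1) = 0) : s (n + 1) = 0 ∧ v (n + 1) = 0 := by
  induction n with
  | zero => exact ⟨L.s_one, L.v_one⟩
  | succ n ih =>
    have hh_prev : h (n + 1) = 0 := by
      refine le_antisymm (nonpos_of_mul_nonpos_right ?_ (hlam n))
        (L.h_nonneg (fun t => (hlam t).le) n)
      exact (L.mul_h_le n).trans_eq hh
    simp [L.s_succ (n + 1) n.succ_pos, L.v_succ (n + 1) n.succ_pos, ih hh_prev,
      L.gt_eq_zero (fun t => (hlam t).le) hh_prev]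

lemma xt_eq_learnerPrediction (L : IsMagnitudeLearner eps lam v s h xt x g gclip gt)
    (hlam : ∀ t, 0 < lam t) {n : ℕ} (hs : -h (n + 1) ≤ s (n + 1)) :
    xt (n + 1) = eps * learnerPrediction (v (n + 1)) (h (n + 1)) (s (n + 1)) := by
  by_cases hh : h (n + 1) = 0
  · rw [(L.xt_eq (n + 1) n.succ_pos).1 hh, hh, (L.state_eq_zero hlam hh).1]
    simp [learnerPrediction, erfiPotentialSlope]
  · have hvar := regularizedVariance_nonneg (L.v_nonneg n)
      (L.h_nonneg (fun t => (hlam t).le) n) hs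
    rw [(L.xt_eq (n + 1) n.succ_pos).2 hh, learnerPrediction, erfiPotentialSlope, div_pow, mul_pow,
      sq_sqrt hvar, show (2 : ℝ) ^ 2 = 4 by norm_num]
    ring

lemma gt_mul_x_le (L : IsMagnitudeLearner eps lam v s h xt x g gclip gt) (n : ℕ) :
    gt (n + 1) * x (n + 1) ≤ gt (n + 1) * xt (n + 1) := by
  rw [L.gt_eq (n + 1) n.succ_pos]
  split_ifs with hlt
  · simp
  · exact not_lt.1 hlt

lemma s_nonneg_of_gt_pos (L : IsMagnitudeLearner eps lam v s h xt x g gclip gt)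
    (heps : 0 < eps) (hlam : ∀ t, 0 < lam t) {n : ℕ} (hs : -h (n + 1) ≤ s (n + 1))
    (hgt : 0 < gt (n + 1)) : 0 ≤ s (n + 1) := by
  have hlam₀ : ∀ t, 0 ≤ lam t := fun t => (hlam t).le
  have hh : 0 < h (n + 1) :=
    (L.h_nonneg hlam₀ n).lt_of_ne' fun hh₀ => hgt.ne' (L.gt_eq_zero hlam₀ hh₀)
  have hxt : 0 ≤ xt (n + 1) := (L.x_nonneg n).trans (le_of_mul_le_mul_left (L.gt_mul_x_le n) hgt)
  by_contra! hs_neg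
  have hq := sqrt_pos.2 (regularizedVariance_pos (L.v_nonneg n) hh hs)
  have hslope : learnerPrediction (v (n + 1)) (h (n + 1)) (s (n + 1)) < 0 :=
    erfiPotentialSlope_neg (div_pos hh hq) hq.le hs_neg.le
  rw [L.xt_eq_learnerPrediction hlam hs] at hxt
  exact (mul_neg_of_pos_of_neg heps hslope).not_ge hxt

lemma neg_mul_h_le_s_succ (L : IsMagnitudeLearner eps lam v s h xt x g gclip gt)
    (heps : 0 < eps) (hlam : ∀ t, 0 < lam t) {n : ℕ} (hs : -h (n + 1) ≤ s (n + 1)) :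
    -(lam n * h (n + 1)) ≤ s (n + 2) := by
  rw [L.s_succ (n + 1) n.succ_pos, Nat.add_sub_cancel]
  rcases le_or_gt (gt (n + 1)) 0 with hgt | hgt
  · linarith [mul_le_mul_of_nonneg_left hs (hlam n).le]
  · linarith [mul_nonneg (hlam n).le (L.s_nonneg_of_gt_pos heps hlam hs hgt),
      (abs_le.1 (L.abs_gt_le (fun t => (hlam t).le) n)).2]

lemma neg_h_le_s (L : IsMagnitudeLearner eps lam v s h xt x g gclip gt)
    (heps : 0 < eps) (hlam : ∀ t, 0 < lam t) (n : ℕ) : -h (n + 1) ≤ s (n + 1) := by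
  induction n with
  | zero => simp [L.h_one, L.s_one]
  | succ n ih => exact (neg_le_neg (L.mul_h_le n)).trans (L.neg_mul_h_le_s_succ heps hlam ih)

lemma potential_succ_le (L : IsMagnitudeLearner eps lam v s h xt x g gclip gt)
    (heps : 0 < eps) (hlam : ∀ t, 0 < lam t) (n : ℕ) :
    eps * learnerPotential (v (n + 2)) (h (n + 2)) (s (n + 2))
      ≤ lam n * (eps * learnerPotential (v (n + 1)) (h (n + 1)) (s (n + 1)))
        - gt (n + 1) * xt (n + 1) := by
  have hlam₀ : ∀ t, 0 ≤ lam t := fun t => (hlam t).le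
  have hs := L.neg_h_le_s heps hlam n
  have hs_succ := L.s_succ (n + 1) n.succ_pos
  have hstep : learnerPotential (v (n + 2)) (h (n + 2)) (s (n + 2))
      ≤ lam n * learnerPotential (v (n + 1)) (h (n + 1)) (s (n + 1))
        - gt (n + 1) * learnerPrediction (v (n + 1)) (h (n + 1)) (s (n + 1)) := by
    rw [L.v_succ (n + 1) n.succ_pos, hs_succ, Nat.add_sub_cancel]
    rcases (L.h_nonneg hlam₀ n).eq_or_lt' with hh | hh
    · obtain ⟨hs₀, hv₀⟩ := L.state_eq_zero hlam hh
      simp [L.gt_eq_zero hlam₀ hh, hs₀, hv₀, hh, learnerPotential, erfiPotential,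
        regularizedVariance]
    · exact learnerPotential_update_le (hlam n) (L.v_nonneg n) hh hs (L.abs_gt_le hlam₀ n)
        ((L.neg_mul_h_le_s_succ heps hlam hs).trans_eq hs_succ) (L.mul_h_le n)
  rw [L.xt_eq_learnerPrediction hlam hs]
  linarith [mul_le_mul_of_nonneg_left hstep heps.le]

lemma discountedSum_gt_mul_le (L : IsMagnitudeLearner eps lam v s h xt x g gclip gt)
    (heps : 0 < eps) (hlam : ∀ t, 0 < lam t) (u : ℝ) (T : ℕ) :
    discountedSum lam (fun t => gt t * (xt t - u)) T
      ≤ u * s (T + 1) - eps * learnerPotential (v (T + 1)) (h (T + 1)) (s (T + 1)) := by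
  refine discountedSum_le_of_step
    (Y := fun n => u * s (n + 1) - eps * learnerPotential (v (n + 1)) (h (n + 1)) (s (n + 1)))
    (fun t => (hlam t).le) T.zero_le ?_ fun n _ _ => ?_
  · simp [discountedSum_zero, L.v_one, L.h_one, L.s_one, learnerPotential, erfiPotential,
      regularizedVariance]
  · have hs : s (n + 2) = lam n * s (n + 1) - gt (n + 1) := L.s_succ (n + 1) n.succ_pos
    linarith [L.potential_succ_le heps hlam n, congrArg (u * ·) hs]

lemma gclip_mul_sub_le (L : IsMagnitudeLearner eps lam v s h xt x g gclip gt) {u : ℝ}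
    (hu : 0 ≤ u) (n : ℕ) :
    gclip (n + 1) * (x (n + 1) - u) ≤ gt (n + 1) * (xt (n + 1) - u) := by
  rw [L.gt_eq (n + 1) n.succ_pos]
  split_ifs with hlt
  · have hx_eq := L.x_eq (n + 1) n.succ_pos
    have hxt : xt (n + 1) < 0 := by
      by_contra! hxt
      rw [hx_eq, max_eq_left hxt] at hlt
      exact hlt.false
    rw [max_eq_right hxt.le] at hx_eq
    rw [hx_eq] at hlt ⊢
    nlinarith
  · linarith

lemma g_mul_sub_le (L : IsMagnitudeLearner eps lam v s h xt x g gclip gt)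
    (hlam : ∀ t, 0 ≤ lam t) {u : ℝ} (hu : 0 ≤ u) (n : ℕ) :
    g (n + 1) * (x (n + 1) - u) ≤ gt (n + 1) * (xt (n + 1) - u)
      + (h (n + 2) - lam n * h (n + 1)) * (x (n + 1) + u) := by
  have hclip : |g (n + 1) - gclip (n + 1)| ≤ h (n + 2) - lam n * h (n + 1) := by
    rw [L.gclip_eq (n + 1) n.succ_pos, L.h_succ (n + 1) n.succ_pos, Nat.add_sub_cancel]
    exact abs_sub_clip_le (mul_nonneg (hlam n) (L.h_nonneg hlam n)) _
  have hdist : |x (n + 1) - u| ≤ x (n + 1) + u :=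
    abs_le.2 ⟨by linarith [L.x_nonneg n], by linarith⟩
  calc g (n + 1) * (x (n + 1) - u)
      = gclip (n + 1) * (x (n + 1) - u) + (g (n + 1) - gclip (n + 1)) * (x (n + 1) - u) := by ring
    _ ≤ _ := by
      gcongr ?_ + ?_
      · exact L.gclip_mul_sub_le hu n
      · calc _ ≤ |g (n + 1) - gclip (n + 1)| * |x (n + 1) - u| :=
              (le_abs_self _).trans_eq (abs_mul _ _)
          _ ≤ _ := mul_le_mul hclip hdist (abs_nonneg _) ((abs_nonneg _).trans hclip)

lemma discountedSum_g_mul_le (L : IsMagnitudeLearner eps lam v s h xt x g gclip gt)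
    (heps : 0 < eps) (hlam : ∀ t, 0 < lam t) {u : ℝ} (hu : 0 ≤ u) {N T : ℕ} (hNT : N < T)
    {M₁ M₂ : ℝ} (hM₁ : ∀ t ∈ Finset.Icc 1 N, x t ≤ M₁)
    (hM₂ : ∀ t ∈ Finset.Icc (N + 1) T, x t ≤ M₂) :
    discountedSum lam (fun t => g t * (x t - u)) T
      ≤ u * s (T + 1) - eps * learnerPotential (v (T + 1)) (h (T + 1)) (s (T + 1))
        + (M₂ * h (T + 1) + (∏ t ∈ Finset.Ico N T, lam t) * M₁ * h (N + 1)) + u * h (T + 1) := by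
  have hlam₀ : ∀ t, 0 ≤ lam t := fun t => (hlam t).le
  let G := fun n => h (n + 1)
  have hM₂₀ : 0 ≤ M₂ := (L.x_nonneg N).trans (hM₂ (N + 1) (Finset.left_mem_Icc.2 hNT))
  have hclipped := L.discountedSum_gt_mul_le heps hlam u T
  have hwindow := discountedSum_increment_mul_le_window (G := G) hlam₀ L.h_one L.mul_h_le hNT.le
    (L.h_nonneg hlam₀ N) hM₂₀ hM₁ hM₂
  have hcomparator := discountedSum_increment_mul_le (G := G) hlam₀ L.h_one L.mul_h_le
    (x := fun _ => u) (T := T) fun _ _ => le_rfl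
  refine le_trans (discountedSum_mono hlam₀ fun t ht => ?_) <|
    (discountedSum_add ..).trans_le <| add_le_add ((discountedSum_add ..).trans_le <|
      add_le_add hclipped hwindow) hcomparator
  obtain ⟨n, rfl⟩ := Nat.exists_eq_add_one.2 (Finset.mem_Icc.1 ht).1
  simp only [G, Nat.add_sub_cancel]
  linarith [L.g_mul_sub_le hlam₀ hu n]

end IsMagnitudeLearner

theorem magnitude_learner_discounted_regret_general
    {eps : ℝ} (heps : 0 < eps) {lam : ℕ → ℝ} (hlam : ∀ t, 0 < lam t)
    {v s h xt x g gclip gt : ℕ → ℝ} (L : IsMagnitudeLearner eps lam v s h xt x g gclip gt)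
    {l : ℕ → ℝ → ℝ}
    (hg : ∀ t, 1 ≤ t → ∀ y ∈ Set.Ici (0 : ℝ), l t (x t) + g t * (y - x t) ≤ l t y)
    {u : ℝ} (hu : 0 ≤ u) {T τ : ℕ} (hτ : 1 ≤ τ) (hτT : τ ≤ T) {V : ℝ} {G : ℕ → ℝ}
    (hV : V = discountedSum (fun i => lam i ^ 2) (fun i => g i ^ 2) T)
    (hG : ∀ t, G t = discountedMax lam (fun i => |g i|) t) {S M₁ M₂ : ℝ}
    (hS : S = comparatorThreshold eps u V (G T))
    (hM₁ : ∀ t ∈ Finset.Icc 1 (T - τ), x t ≤ M₁)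
    (hM₂ : ∀ t ∈ Finset.Icc (T - τ + 1) T, x t ≤ M₂) :
    discountedSum lam (fun t => l t (x t) - l t u) T
      ≤ eps * √(V + 2 * G T * S + 16 * G T ^ 2) + u * (S + G T) + M₂ * G T
        + (∏ t ∈ Finset.Icc (T - τ) (T - 1), lam t) * M₁ * G (T - τ) := by
  have hlam₀ : ∀ t, 0 ≤ lam t := fun t => (hlam t).le
  have hhG (n : ℕ) : h (n + 1) = G n := (L.h_add_one n).trans (hG n).symm
  have hlinear : discountedSum lam (fun t => l t (x t) - l t u) T
      ≤ discountedSum lam (fun t => g t * (x t - u)) T :=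
    discountedSum_mono hlam₀ fun t ht => by linarith [hg t (Finset.mem_Icc.1 ht).1 u hu]
  have hregret := L.discountedSum_g_mul_le heps hlam hu (by lia) hM₁ hM₂
  have hpotential := mul_sub_learnerPotential_le heps hu (L.v_nonneg T)
    ((L.v_le hlam₀ T).trans_eq hV.symm) (L.h_nonneg hlam₀ T) (L.neg_h_le_s heps hlam T)
    fun hh => (L.state_eq_zero hlam hh).1
  have hwindow : Finset.Icc (T - τ) (T - 1) = Finset.Ico (T - τ) T :=
    Finset.Icc_sub_one_right_eq_Ico_of_not_isMin (by simp; lia) _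
  rw [hhG] at hpotential
  rw [hhG, hhG] at hregret
  rw [hwindow, hS]
  linarith

/-- Discounted regret guarantee for the 1D FTRL-based magnitude
learner on `[0,∞)` (Algorithm 1). -/
theorem magnitude_learner_discounted_regret
    (eps : ℝ) (heps : 0 < eps)
    (lam : ℕ → ℝ) (hlam : ∀ t, 0 < lam t) (hlam0 : lam 0 = 1)
    (l : ℕ → ℝ → ℝ) (hconv : ∀ t, ConvexOn ℝ (Set.Ici 0) (l t))
    (v s h xt x g gclip gt : ℕ → ℝ)
    (hv1 : v 1 = 0) (hs1 : s 1 = 0) (hh1 : h 1 = 0)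
    (hxt : ∀ t, 1 ≤ t →
      (h t = 0 → xt t = 0) ∧
      (h t ≠ 0 → xt t =
        eps * erfi (s t / (2 * Real.sqrt (v t + 2 * h t * s t + 16 * (h t)^2)))
        - eps * h t / Real.sqrt (v t + 2 * h t * s t + 16 * (h t)^2)
          * Real.exp ((s t)^2 / (4 * (v t + 2 * h t * s t + 16 * (h t)^2)))))
    (hx : ∀ t, 1 ≤ t → x t = max (xt t) 0)
    (hg : ∀ t, 1 ≤ t → ∀ y ∈ Set.Ici (0:ℝ), l t (x t) + g t * (y - x t) ≤ l t y)
    (hgclip : ∀ t, 1 ≤ t →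
      gclip t = max (-(lam (t-1) * h t)) (min (g t) (lam (t-1) * h t)))
    (hh : ∀ t, 1 ≤ t → h (t+1) = max (lam (t-1) * h t) |g t|)
    (hgt : ∀ t, 1 ≤ t →
      gt t = if gclip t * xt t < gclip t * x t then 0 else gclip t)
    (hvrec : ∀ t, 1 ≤ t → v (t+1) = (lam (t-1))^2 * v t + (gt t)^2)
    (hsrec : ∀ t, 1 ≤ t → s (t+1) = lam (t-1) * s t - gt t)
    (T : ℕ) (hT : 1 ≤ T)
    (u : ℝ) (hu : 0 ≤ u)
    (τ : ℕ) (hτ1 : 1 ≤ τ) (hτT : τ ≤ T)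
    (V G : ℕ → ℝ)
    (hV : ∀ t, V t = ∑ i ∈ Finset.Icc 1 t, (∏ j ∈ Finset.Icc i (t-1), (lam j)^2) * (g i)^2)
    (hG0 : G 0 = 0)
    (hGdef : ∀ t, ∀ (ht : 1 ≤ t), G t = (Finset.Icc 1 t).sup'
      (Finset.nonempty_Icc.mpr ht) (fun i => (∏ j ∈ Finset.Icc i (t-1), lam j) * |g i|))
    (S M1 M2 : ℝ)
    (hS : S = 8 * G T * (1 + Real.sqrt (Real.log (2 * u * eps⁻¹ + 1)))^2
        + 2 * Real.sqrt (V T + 16 * (G T)^2)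
          * (1 + Real.sqrt (Real.log (2 * u * eps⁻¹ + 1))))
    (hM2 : M2 = (Finset.Icc (T - τ + 1) T).sup' (Finset.nonempty_Icc.mpr (by omega)) x)
    (hM1 : ∀ (h1 : 1 ≤ T - τ), M1 = (Finset.Icc 1 (T - τ)).sup' (Finset.nonempty_Icc.mpr h1) x)
    (hM1' : T - τ = 0 → M1 = 0) :
    ∑ t ∈ Finset.Icc 1 T, (∏ i ∈ Finset.Icc t (T-1), lam i) * (l t (x t) - l t u)
      ≤ eps * Real.sqrt (V T + 2 * G T * S + 16 * (G T)^2)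
        + u * (S + G T)
        + M2 * G T
        + (∏ t ∈ Finset.Icc (T - τ) (T-1), lam t) * M1 * G (T - τ) := by
  have hG : ∀ t, G t = discountedMax lam (fun i => |g i|) t
    | 0 => hG0
    | t + 1 => (hGdef _ t.succ_pos).trans
        (discountedMax_eq_sup' (fun t => (hlam t).le) (abs_nonneg _) t.succ_pos).symm
  exact magnitude_learner_discounted_regret_general heps hlam
    ⟨hv1, hs1, hh1, hxt, hx, hgclip, hh, hgt, hvrec, hsrec⟩ hg hu hτ1 hτT (hV T) hG hS
    (fun _ ht => (Finset.le_sup' x ht).trans_eq (hM1 (Finset.nonempty_Icc.1 ⟨_, ht⟩)).symm)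
    fun _ ht => (Finset.le_sup' x ht).trans_eq hM2.symm
end

section
/- Let ε > 0 and consider the undiscounted 1D magnitude learner on [0,∞): initialize v_1 = s_1 = h_1 = 0; in round t, if h_t = 0 set x̃_t = 0, otherwise set x̃_t = ε·erfi( s_t / (2√(v_t + 2h_t s_t + 16h_t²)) ) − ε·h_t/√(v_t + 2h_t s_t + 16h_t²) · exp( s_t² / (4(v_t + 2h_t s_t + 16h_t²)) ), where erfi(x) := ∫₀ˣ exp(u²) du; predict x_t = max(x̃_t, 0); receive a loss gradient g_t ∈ ℝ; set g_{t,clip} = the projection of g_t onto [−h_t, h_t] and h_{t+1} = max(h_t, |g_t|); set g̃_{t,clip} = g_{t,clip} if g_{t,clip}·x̃_t ≥ g_{t,clip}·x_t and g̃_{t,clip} = 0 otherwise; update v_{t+1} = v_t + g̃_{t,clip}² and s_{t+1} = s_t − g̃_{t,clip}. Then for all T ∈ ℕ_+, all gradient sequences g_{1:T}, and all comparators u ∈ [0,∞): Σ_{t=1}^T g_t·(x_t − u) ≤ ε·√(Σ_{t=1}^T g_t² + 2·G·S + 16·G²) + u·S + Σ_{t=1}^T |g_t − g_{t,clip}|·|x_t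 − u|, where G = max_{t∈[1:T]} |g_t| and S = 8·G·(1 + √(log(2u·ε^{-1} + 1)))² + 2·√(Σ_{t=1}^T g_t² + 16·G²)·(1 + √(log(2u·ε^{-1} + 1))). -/
open scoped BigOperators

/-!
Let `Φ(w, s) = s · erfi (s / (2√w)) - √w · exp (s² / (4w))`, which solves the backward heat equation
`∂_w Φ = -∂_ss Φ`. Up to the factor `ε`, the prediction is the derivative in `s` of
`s ↦ Φ(v + 2hs + 16h², s)`. Moving the surrogate gradient from `0` to `c` turns `Φ` plus the linear
loss `c · prediction` into a concave function of `c` that is critical at `0`, so no round increases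
`Φ` plus accumulated loss, and the regret of the clipped gradients is at most
`u s - ε Φ(v + 2hs + 16h², s)` at the end of the game. For `s ≤ S` this is bounded through
`Φ ≥ -√w`; for `s ≥ S` it decreases in `s`, because there the prediction exceeds `u`.
-/

namespace MagnitudeLearner

open Real Set

theorem isMaxOn_of_concaveOn_of_hasDerivAt_zero {D : Set ℝ} {f : ℝ → ℝ} {x₀ : ℝ}
    (hf : ConcaveOn ℝ D f) (hx₀ : x₀ ∈ D) (hf' : HasDerivAt f 0 x₀) : IsMaxOn f D x₀ := by
  intro x hx
  rcases lt_trichotomy x x₀ with hlt | rfl | hgt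
  · have hslope := hf.le_slope_of_hasDerivAt hx hx₀ hlt hf'
    rwa [slope_def_field, le_div_iff₀ (sub_pos.mpr hlt), zero_mul, sub_nonneg] at hslope
  · exact le_refl (f x)
  · have hslope := hf.slope_le_of_hasDerivAt hx₀ hx hgt hf'
    rwa [slope_def_field, div_le_iff₀ (sub_pos.mpr hgt), zero_mul, sub_nonpos] at hslope

/-! ### The imaginary error function -/

theorem erfi_zero : erfi 0 = 0 := intervalIntegral.integral_same

theorem hasDerivAt_erfi (x : ℝ) : HasDerivAt erfi (exp (x ^ 2)) x :=
  (by fun_prop : Continuous fun u : ℝ ↦ exp (u ^ 2)).integral_hasStrictDerivAt 0 x |>.hasDerivAt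

theorem monotone_erfi : Monotone erfi :=
  monotone_of_hasDerivAt_nonneg hasDerivAt_erfi fun x ↦ (exp_pos (x ^ 2)).le

theorem exp_sq_le_two_mul_mul_erfi_add_one (y : ℝ) : exp (y ^ 2) ≤ 2 * y * erfi y + 1 := by
  let f : ℝ → ℝ := fun y ↦ exp (y ^ 2) - 2 * y * erfi y
  have hf (y : ℝ) : HasDerivAt f (-(2 * erfi y)) y := by
    refine ((hasDerivAt_pow 2 y).exp.sub
      (((hasDerivAt_id y).const_mul 2).mul (hasDerivAt_erfi y))).congr_deriv ?_
    simp only [id_eq]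
    ring
  have hf' (y : ℝ) : HasDerivAt (fun y ↦ -(2 * erfi y)) (-(2 * exp (y ^ 2))) y :=
    ((hasDerivAt_erfi y).const_mul 2).neg
  have hconcave : ConcaveOn ℝ univ f :=
    concaveOn_of_hasDerivWithinAt2_nonpos convex_univ
      (fun y _ ↦ (hf y).continuousAt.continuousWithinAt)
      (fun y _ ↦ (hf y).hasDerivWithinAt) (fun y _ ↦ (hf' y).hasDerivWithinAt)
      fun y _ ↦ by linarith [exp_pos (y ^ 2)]
  have hcritical : HasDerivAt f 0 0 := by simpa [erfi_zero] using hf 0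
  have hmax : f y ≤ f 0 :=
    isMaxOn_of_concaveOn_of_hasDerivAt_zero hconcave (mem_univ 0) hcritical (mem_univ y)
  have hf_zero : f 0 = 1 := by simp [f]
  linarith

/-- The factor `exp (2y - 1) ≥ 2y` gained between `exp ((y - 1)²)` and `exp (y²)` pays for the
denominators. -/
theorem le_erfi_sub_exp_div {U y : ℝ} (hy : 1 ≤ y) (hU : 2 * U + 1 ≤ exp ((y - 1) ^ 2)) :
    U ≤ erfi y - exp (y ^ 2) / (4 * y) := by
  have hy0 : 0 < y := by linarith
  have hexp : exp (y ^ 2) = exp ((y - 1) ^ 2) * exp (2 * y - 1) := by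
    rw [← exp_add]
    ring_nf
  have hlinear : 2 * y ≤ exp (2 * y - 1) := by linarith [add_one_le_exp (2 * y - 1)]
  have hgrowth : (2 * U + 1) * (2 * y) ≤ exp (y ^ 2) := by
    rw [hexp]
    gcongr
  have herfi := exp_sq_le_two_mul_mul_erfi_add_one y
  rw [le_sub_iff_add_le, ← le_sub_iff_add_le', div_le_iff₀ (mul_pos four_pos hy0)]
  nlinarith

/-! ### The potential -/

/-- `Φ(w, s) = s · erfi (s / (2√w)) - √w · exp (s² / (4w))`, the potential of the learner with
`ε = 1`, in the variance scale `w` and the accumulated negative gradient `s`. -/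
noncomputable def potential (w s : ℝ) : ℝ :=
  s * erfi (s / (2 * √w)) - √w * exp (s ^ 2 / (4 * w))

/-- `exp (s² / (4w)) / √w`, the solution of the backward heat equation which equals both `2 ∂_ss Φ`
and `-2 ∂_w Φ` for the potential `Φ`. -/
noncomputable def kernel (w s : ℝ) : ℝ := exp (s ^ 2 / (4 * w)) / √w

theorem kernel_pos {w : ℝ} (hw : 0 < w) (s : ℝ) : 0 < kernel w s :=
  div_pos (exp_pos _) (sqrt_pos.mpr hw)

theorem div_two_mul_sqrt_sq {w : ℝ} (hw : 0 ≤ w) (s : ℝ) :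
    (s / (2 * √w)) ^ 2 = s ^ 2 / (4 * w) := by
  rw [div_pow, mul_pow, sq_sqrt hw]
  norm_num

theorem sqrt_mul_exp_eq_mul_kernel (w s : ℝ) : √w * exp (s ^ 2 / (4 * w)) = w * kernel w s := by
  rw [kernel, mul_div_left_comm, div_sqrt, mul_comm]

theorem potential_zero_right (w : ℝ) : potential w 0 = -√w := by
  simp [potential]

theorem neg_sqrt_le_potential (w s : ℝ) : -√w ≤ potential w s := by
  rcases le_or_gt w 0 with hw | hw
  · simp [potential, sqrt_eq_zero_of_nonpos hw, erfi_zero]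
  have hq : √w ≠ 0 := (sqrt_pos.mpr hw).ne'
  have hexp := exp_sq_le_two_mul_mul_erfi_add_one (s / (2 * √w))
  rw [div_two_mul_sqrt_sq hw.le] at hexp
  calc -√w
      = s * erfi (s / (2 * √w)) - √w * (2 * (s / (2 * √w)) * erfi (s / (2 * √w)) + 1) := by
        field_simp
        ring
    _ ≤ potential w s := by
        unfold potential
        gcongr

section Derivatives

variable {w s : ℝ → ℝ} {w' s' x : ℝ}

theorem hasDerivAt_erfi_div_two_mul_sqrt (hw : HasDerivAt w w' x) (hs : HasDerivAt s s' x)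
    (hpos : 0 < w x) :
    HasDerivAt (fun τ ↦ erfi (s τ / (2 * √(w τ))))
      (kernel (w x) (s x) * (s' / 2 - s x * w' / (4 * w x))) x := by
  have hq : √(w x) ≠ 0 := (sqrt_pos.mpr hpos).ne'
  have hq_sq : √(w x) ^ 2 = w x := sq_sqrt hpos.le
  refine ((hasDerivAt_erfi _).comp x
    (hs.div ((hw.sqrt hpos.ne').const_mul 2) (mul_ne_zero two_ne_zero hq))).congr_deriv ?_
  rw [Pi.div_apply, div_two_mul_sqrt_sq hpos.le, kernel]
  field_simp
  rw [hq_sq]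
  ring

theorem hasDerivAt_kernel (hw : HasDerivAt w w' x) (hs : HasDerivAt s s' x) (hpos : 0 < w x) :
    HasDerivAt (fun τ ↦ kernel (w τ) (s τ))
      (kernel (w x) (s x) *
        (s x * s' / (2 * w x) - s x ^ 2 * w' / (4 * w x ^ 2) - w' / (2 * w x))) x := by
  have hq : √(w x) ≠ 0 := (sqrt_pos.mpr hpos).ne'
  have hq_sq : √(w x) ^ 2 = w x := sq_sqrt hpos.le
  refine (((hs.pow 2).div (hw.const_mul 4) (by positivity)).exp.div
    (hw.sqrt hpos.ne') hq).congr_deriv ?_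
  simp only [Pi.div_apply, Pi.pow_apply, kernel]
  field_simp
  rw [hq_sq]
  ring

theorem hasDerivAt_potential (hw : HasDerivAt w w' x) (hs : HasDerivAt s s' x) (hpos : 0 < w x) :
    HasDerivAt (fun τ ↦ potential (w τ) (s τ))
      (erfi (s x / (2 * √(w x))) * s' - kernel (w x) (s x) * w' / 2) x := by
  simp only [potential, sqrt_mul_exp_eq_mul_kernel]
  refine ((hs.mul (hasDerivAt_erfi_div_two_mul_sqrt hw hs hpos)).sub
    (hw.mul (hasDerivAt_kernel hw hs hpos))).congr_deriv ?_
  field_simp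
  ring

end Derivatives

theorem antitoneOn_potential (s : ℝ) : AntitoneOn (fun w ↦ potential w s) (Ioi 0) := by
  have hderiv (w : ℝ) (hw : 0 < w) :
      HasDerivAt (fun w ↦ potential w s) (-(kernel w s / 2)) w :=
    (hasDerivAt_potential (hasDerivAt_id w) (hasDerivAt_const w s) hw).congr_deriv (by simp)
  refine antitoneOn_of_hasDerivWithinAt_nonpos (convex_Ioi 0)
    (fun w hw ↦ (hderiv w hw).continuousAt.continuousWithinAt)
    (fun w hw ↦ (hderiv w (interior_subset hw)).hasDerivWithinAt) fun w hw ↦ ?_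
  linarith [kernel_pos (interior_subset hw : w ∈ Ioi 0) s]

/-! ### The prediction -/

/-- The variance scale `v + 2hs + 16h²` at which the learner evaluates its potential. -/
def scale (h v s : ℝ) : ℝ := v + 2 * h * s + 16 * h ^ 2

/-- The unprojected prediction of the learner with `ε = 1`. -/
noncomputable def prediction (h v s : ℝ) : ℝ :=
  if h = 0 then 0 else erfi (s / (2 * √(scale h v s))) - h * kernel (scale h v s) s

theorem prediction_of_ne_zero {h : ℝ} (hh : h ≠ 0) (v s : ℝ) :
    prediction h v s = erfi (s / (2 * √(scale h v s))) - h * kernel (scale h v s) s :=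
  if_neg hh

theorem scale_pos {h v s : ℝ} (hh : 0 < h) (hv : 0 ≤ v) (hs : -h ≤ s) : 0 < scale h v s := by
  unfold scale
  nlinarith [sq_pos_of_pos hh]

theorem prediction_neg {h v s : ℝ} (hv : 0 ≤ v) (hs : -h ≤ s) (hs_neg : s < 0) :
    prediction h v s < 0 := by
  have hh : 0 < h := by linarith
  have herfi : erfi (s / (2 * √(scale h v s))) ≤ 0 :=
    erfi_zero ▸ monotone_erfi (div_nonpos_of_nonpos_of_nonneg hs_neg.le (by positivity))
  rw [prediction_of_ne_zero hh.ne']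
  linarith [mul_pos hh (kernel_pos (scale_pos hh hv hs) s)]

theorem hasDerivAt_potential_scale {h v s : ℝ} (hh : h ≠ 0) (hpos : 0 < scale h v s) :
    HasDerivAt (fun σ ↦ potential (scale h v σ) σ) (prediction h v s) s := by
  have hscale : HasDerivAt (scale h v) (2 * h) s := by
    exact ((((hasDerivAt_id s).const_mul (2 * h)).const_add v).add_const (16 * h ^ 2)).congr_deriv
      (mul_one _)
  refine (hasDerivAt_potential hscale (hasDerivAt_id s) hpos).congr_deriv ?_
  rw [prediction_of_ne_zero hh, id_eq]
  ring

theorem potential_scale_le_of_le {h k v s : ℝ} (hh : 0 ≤ h) (hhk : h ≤ k) (hv : 0 ≤ v)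
    (hs : -h ≤ s) (hs_zero : h = 0 → s = 0) :
    potential (scale k v s) s ≤ potential (scale h v s) s := by
  have hscale : scale h v s ≤ scale k v s := by
    unfold scale
    nlinarith [mul_nonneg (sub_nonneg.mpr hhk) (by linarith : 0 ≤ s + h),
      mul_nonneg (sub_nonneg.mpr hhk) hh, mul_nonneg (sub_nonneg.mpr hhk) (hh.trans hhk)]
  rcases hh.eq_or_lt with hh0 | hh
  · obtain rfl := hs_zero hh0.symm
    simpa only [potential_zero_right, neg_le_neg_iff] using sqrt_le_sqrt hscale
  · have hpos := scale_pos hh hv hs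
    exact antitoneOn_potential s hpos (hpos.trans_le hscale) hscale

/-! ### One round -/

/-- The potential after a round with surrogate gradient `c`, started in the state `(v, s)`, before
the bound `h` on the gradients is updated. -/
noncomputable def stepPotential (h v s c : ℝ) : ℝ := potential (scale h (v + c ^ 2) (s - c)) (s - c)

/-- The derivative of `stepPotential` in the surrogate gradient `c`. -/
noncomputable def stepSlope (h v s c : ℝ) : ℝ :=
  (h - c) * kernel (scale h (v + c ^ 2) (s - c)) (s - c)
    - erfi ((s - c) / (2 * √(scale h (v + c ^ 2) (s - c))))

theorem hasDerivAt_stepScale (h v s c : ℝ) :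
    HasDerivAt (fun c ↦ scale h (v + c ^ 2) (s - c)) (-(2 * (h - c))) c := by
  refine ((((hasDerivAt_pow 2 c).const_add v).add
    (((hasDerivAt_id c).const_sub s).const_mul (2 * h))).add_const (16 * h ^ 2)).congr_deriv ?_
  norm_num
  ring

section Step

variable {h v s c : ℝ}

theorem hasDerivAt_stepPotential (hpos : 0 < scale h (v + c ^ 2) (s - c)) :
    HasDerivAt (stepPotential h v s) (stepSlope h v s c) c := by
  refine (hasDerivAt_potential (hasDerivAt_stepScale h v s c) ((hasDerivAt_id c).const_sub s)
    hpos).congr_deriv ?_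
  simp only [id_eq, stepSlope]
  ring

theorem hasDerivAt_stepSlope (hpos : 0 < scale h (v + c ^ 2) (s - c)) :
    HasDerivAt (stepSlope h v s)
      (kernel (scale h (v + c ^ 2) (s - c)) (s - c) *
        (-(1 / 2) - (h - c) * (s - c) / scale h (v + c ^ 2) (s - c)
          + ((h - c) * (s - c) / scale h (v + c ^ 2) (s - c)) ^ 2 / 2
          + (h - c) ^ 2 / scale h (v + c ^ 2) (s - c))) c := by
  have hscale := hasDerivAt_stepScale h v s c
  have hsub := (hasDerivAt_id c).const_sub s
  refine ((((hasDerivAt_id c).const_sub h).mul (hasDerivAt_kernel hscale hsub hpos)).sub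
    (hasDerivAt_erfi_div_two_mul_sqrt hscale hsub hpos)).congr_deriv ?_
  simp only [id_eq]
  field_simp
  ring

/-- The constants `2` and `16` in the scale are chosen to make this hold: with `q = d s / w` they
force `-1/7 ≤ q ≤ 1` and `d² / w ≤ 2/7`. -/
theorem stepCurvature_nonpos {w d : ℝ} (hh : 0 < h) (hs : -h ≤ s)
    (hw : 2 * h * s + 16 * h ^ 2 ≤ w) (hd : 0 ≤ d) (hd' : d ≤ 2 * h) :
    -(1 / 2) - d * s / w + (d * s / w) ^ 2 / 2 + d ^ 2 / w ≤ 0 := by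
  have hw' : 14 * h ^ 2 ≤ w := by nlinarith
  have hw_pos : 0 < w := by nlinarith [sq_pos_of_pos hh]
  have hds : 0 ≤ d * (s + h) := mul_nonneg hd (by linarith)
  have hds' : d * (s + h) ≤ 2 * h * (s + h) := mul_le_mul_of_nonneg_right hd' (by linarith)
  have hq_lower : -(1 / 7) ≤ d * s / w := by
    rw [le_div_iff₀ hw_pos]
    nlinarith
  have hq_upper : d * s / w ≤ 1 := by
    rw [div_le_one hw_pos]
    nlinarith
  have hr : d ^ 2 / w ≤ 2 / 7 := by
    rw [div_le_iff₀ hw_pos]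
    nlinarith
  nlinarith

theorem concaveOn_stepPotential (hh : 0 < h) (hv : 0 ≤ v) :
    ConcaveOn ℝ (Icc (-h) (min h (s + h))) (stepPotential h v s) := by
  have hpos (c : ℝ) (hc : c ∈ Icc (-h) (min h (s + h))) : 0 < scale h (v + c ^ 2) (s - c) :=
    scale_pos hh (by positivity) (by linarith [(le_min_iff.mp hc.2).2])
  refine concaveOn_of_hasDerivWithinAt2_nonpos (convex_Icc _ _)
    (fun c hc ↦ (hasDerivAt_stepPotential (hpos c hc)).continuousAt.continuousWithinAt)
    (fun c hc ↦ (hasDerivAt_stepPotential (hpos c (interior_subset hc))).hasDerivWithinAt)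
    (fun c hc ↦ (hasDerivAt_stepSlope (hpos c (interior_subset hc))).hasDerivWithinAt)
    fun c hc ↦ ?_
  have hscale := hpos c (interior_subset hc)
  obtain ⟨hc_lower, hc_upper⟩ := interior_subset hc
  obtain ⟨hch, hcs⟩ := le_min_iff.mp hc_upper
  refine mul_nonpos_of_nonneg_of_nonpos (kernel_pos hscale _).le
    (stepCurvature_nonpos hh (by linarith) ?_ (by linarith) (by linarith))
  unfold scale
  nlinarith [sq_nonneg c]

/-- The prediction is minus the derivative of the `stepPotential` at `0`, so the left-hand side is
a concave function of `c` with critical point `0`. -/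
theorem stepPotential_add_mul_prediction_le (hv : 0 ≤ v) (hs : -h ≤ s) (hc : |c| ≤ h)
    (hsc : -h ≤ s - c) :
    stepPotential h v s c + c * prediction h v s ≤ potential (scale h v s) s := by
  rcases ((abs_nonneg c).trans hc).eq_or_lt with rfl | hh
  · obtain rfl : c = 0 := abs_nonpos_iff.mp hc
    simp [stepPotential]
  have hconcave : ConcaveOn ℝ (Icc (-h) (min h (s + h)))
      fun b ↦ stepPotential h v s b + b * prediction h v s :=
    (concaveOn_stepPotential hh hv).add
      ((LinearMap.mulRight ℝ (prediction h v s)).concaveOn (convex_Icc _ _))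
  have hslope : stepSlope h v s 0 + 1 * prediction h v s = 0 := by
    rw [prediction_of_ne_zero hh.ne']
    simp [stepSlope]
  have hcritical : HasDerivAt (fun b ↦ stepPotential h v s b + b * prediction h v s) 0 0 :=
    ((hasDerivAt_stepPotential (by simpa using scale_pos hh hv hs)).add
      ((hasDerivAt_id 0).mul_const (prediction h v s))).congr_deriv hslope
  have h_zero_mem : (0 : ℝ) ∈ Icc (-h) (min h (s + h)) :=
    ⟨by linarith, le_min hh.le (by linarith)⟩
  have hc_mem : c ∈ Icc (-h) (min h (s + h)) :=
    ⟨(abs_le.mp hc).1, le_min (abs_le.mp hc).2 (by linarith)⟩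
  simpa [stepPotential] using
    isMaxOn_of_concaveOn_of_hasDerivAt_zero hconcave h_zero_mem hcritical hc_mem

end Step

/-! ### Comparing the potential with a linear function -/

/-- The state `s` from which on the prediction exceeds every `U` with `2U + 1 ≤ exp ((a - 1)²)`,
for a largest gradient `G` and a gradient variance `V`. -/
noncomputable def threshold (G V a : ℝ) : ℝ := 8 * G * a ^ 2 + 2 * √(V + 16 * G ^ 2) * a

section Threshold

variable {G v V s U a : ℝ}

theorem threshold_nonneg (hG : 0 ≤ G) (ha : 0 ≤ a) : 0 ≤ threshold G V a := by
  unfold threshold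
  positivity

theorem threshold_mono (ha : 0 ≤ a) (hvV : v ≤ V) : threshold G v a ≤ threshold G V a := by
  unfold threshold
  gcongr

theorem le_div_two_mul_sqrt_scale (hG : 0 < G) (hv : 0 ≤ v) (ha : 0 < a)
    (hs : threshold G v a ≤ s) : a ≤ s / (2 * √(scale G v s)) := by
  unfold threshold at hs
  have hq_sq : √(v + 16 * G ^ 2) ^ 2 = v + 16 * G ^ 2 := sq_sqrt (by positivity)
  have hq : 0 ≤ 2 * √(v + 16 * G ^ 2) * a := by positivity
  have hGa : 0 ≤ 8 * G * a ^ 2 := by positivity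
  have hs_nonneg : 0 ≤ s := by linarith
  have hscale : 0 < scale G v s := by
    unfold scale
    positivity
  rw [le_div_iff₀ (by positivity)]
  refine (sq_le_sq₀ (by positivity) hs_nonneg).mp ?_
  calc (a * (2 * √(scale G v s))) ^ 2
      = 8 * G * a ^ 2 * s + (2 * √(v + 16 * G ^ 2) * a) ^ 2 := by
        rw [mul_pow, mul_pow, sq_sqrt hscale.le, mul_pow, mul_pow, hq_sq, scale]
        ring
    _ ≤ 8 * G * a ^ 2 * s + 2 * √(v + 16 * G ^ 2) * a * s := by
        rw [sq (2 * _ * a)]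
        have : 2 * √(v + 16 * G ^ 2) * a ≤ s := by linarith
        gcongr
    _ = (8 * G * a ^ 2 + 2 * √(v + 16 * G ^ 2) * a) * s := by ring
    _ ≤ s * s := by gcongr
    _ = s ^ 2 := (sq s).symm

theorem le_prediction (hG : 0 < G) (hv : 0 ≤ v) (ha : 1 ≤ a) (hU : 2 * U + 1 ≤ exp ((a - 1) ^ 2))
    (hs : threshold G v a ≤ s) : U ≤ prediction G v s := by
  have hs_nonneg : 0 ≤ s := (threshold_nonneg hG.le (by linarith)).trans hs
  have hscale : 0 < scale G v s := scale_pos hG hv (by linarith)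
  have hr : 0 < √(scale G v s) := sqrt_pos.mpr hscale
  have hr_sq : √(scale G v s) ^ 2 = scale G v s := sq_sqrt hscale.le
  set y := s / (2 * √(scale G v s)) with hy
  have hay : a ≤ y := le_div_two_mul_sqrt_scale hG hv (by linarith) hs
  have hy_pos : 0 < y := by linarith
  have hGy : G * (4 * y) ≤ √(scale G v s) := by
    rw [hy, ← mul_div_assoc, ← mul_div_assoc, div_le_iff₀ (by positivity)]
    have : 2 * G * s ≤ √(scale G v s) ^ 2 := by
      rw [hr_sq, scale]
      nlinarith [sq_nonneg G]
    linarith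
  have hkernel : G * kernel (scale G v s) s ≤ exp (y ^ 2) / (4 * y) := by
    rw [kernel, ← div_two_mul_sqrt_sq hscale.le, ← hy, ← mul_div_assoc,
      div_le_div_iff₀ hr (by positivity), mul_right_comm, mul_comm (exp _)]
    gcongr
  have hUy : 2 * U + 1 ≤ exp ((y - 1) ^ 2) := hU.trans (by gcongr)
  rw [prediction_of_ne_zero hG.ne', ← hy]
  linarith [le_erfi_sub_exp_div (ha.trans hay) hUy]

theorem mul_sub_potential_le_of_le {S : ℝ} (hG : 0 ≤ G) (hvV : v ≤ V) (hU : 0 ≤ U) (hs : s ≤ S) :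
    U * s - potential (scale G v s) s ≤ √(scale G V S) + U * S := by
  have hsqrt : √(scale G v s) ≤ √(scale G V S) := by
    unfold scale
    gcongr
  linarith [neg_sqrt_le_potential (scale G v s) s, mul_le_mul_of_nonneg_left hs hU]

theorem antitoneOn_mul_sub_potential (hG : 0 < G) (hv : 0 ≤ v) (ha : 1 ≤ a)
    (hU : 2 * U + 1 ≤ exp ((a - 1) ^ 2)) :
    AntitoneOn (fun s ↦ U * s - potential (scale G v s) s) (Ici (threshold G v a)) := by
  have hderiv (s : ℝ) (hs : threshold G v a ≤ s) :
      HasDerivAt (fun s ↦ U * s - potential (scale G v s) s) (U - prediction G v s) s := by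
    have hs_nonneg : 0 ≤ s := (threshold_nonneg hG.le (by linarith)).trans hs
    exact (((hasDerivAt_id s).const_mul U).sub
      (hasDerivAt_potential_scale hG.ne' (scale_pos hG hv (by linarith)))).congr_deriv
      (by rw [mul_one])
  refine antitoneOn_of_hasDerivWithinAt_nonpos (convex_Ici _)
    (fun s hs ↦ (hderiv s hs).continuousAt.continuousWithinAt)
    (fun s hs ↦ (hderiv s (interior_subset hs)).hasDerivWithinAt) fun s hs ↦ ?_
  exact sub_nonpos.mpr (le_prediction hG hv ha hU (interior_subset hs))

theorem mul_sub_potential_le (hG : 0 ≤ G) (hv : 0 ≤ v) (hvV : v ≤ V) (hs_zero : G = 0 → s = 0)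
    (hU_nonneg : 0 ≤ U) (ha : 1 ≤ a) (hU : 2 * U + 1 ≤ exp ((a - 1) ^ 2)) :
    U * s - potential (scale G v s) s
      ≤ √(scale G V (threshold G V a)) + U * threshold G V a := by
  rcases le_or_gt s (threshold G V a) with hs | hs
  · exact mul_sub_potential_le_of_le hG hvV hU_nonneg hs
  have hthreshold : threshold G v a ≤ threshold G V a := threshold_mono (by linarith) hvV
  have hG_ne : G ≠ 0 := fun hG0 ↦
    hs.not_ge (hs_zero hG0 ▸ threshold_nonneg hG (by linarith))
  calc U * s - potential (scale G v s) s
      ≤ U * threshold G V a - potential (scale G v (threshold G V a)) (threshold G V a) :=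
        antitoneOn_mul_sub_potential (hG.lt_of_ne' hG_ne) hv ha hU hthreshold
          (hthreshold.trans hs.le) hs.le
    _ ≤ √(scale G V (threshold G V a)) + U * threshold G V a :=
        mul_sub_potential_le_of_le hG hvV hU_nonneg le_rfl

end Threshold

/-! ### The algorithm -/

theorem abs_clip_le {h : ℝ} (hh : 0 ≤ h) (g : ℝ) : |max (-h) (min g h)| ≤ h :=
  abs_le.mpr ⟨le_max_left _ _, max_le (by linarith) (min_le_right _ _)⟩

theorem abs_clip_le_abs {h : ℝ} (hh : 0 ≤ h) (g : ℝ) : |max (-h) (min g h)| ≤ |g| := by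
  refine abs_le.mpr ⟨?_, max_le ?_ ((min_le_left _ _).trans (le_abs_self g))⟩
  · rcases le_total g h with hgh | hgh
    · exact (neg_abs_le g).trans ((min_eq_left hgh).ge.trans (le_max_right _ _))
    · exact (neg_nonpos.mpr (abs_nonneg g)).trans
        (hh.trans ((min_eq_right hgh).ge.trans (le_max_right _ _)))
  · linarith [abs_nonneg g]

/-- The surrogate of a gradient `c` at the unprojected prediction `y`: it is dropped when the
projection `max y 0` of `y` onto `[0, ∞)` is worse than `y`, so that the regret of `max y 0` is at
most that of `y` on the surrogate. -/
noncomputable def surrogate (c y : ℝ) : ℝ := if c * y ≥ c * max y 0 then c else 0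

theorem abs_surrogate_le (c y : ℝ) : |surrogate c y| ≤ |c| := by
  unfold surrogate
  split_ifs <;> simp

theorem surrogate_nonpos {c y : ℝ} (hy : y < 0) : surrogate c y ≤ 0 := by
  unfold surrogate
  split_ifs with hc
  · rw [max_eq_right hy.le] at hc
    nlinarith
  · exact le_rfl

theorem mul_max_sub_le_surrogate_mul_sub {u : ℝ} (hu : 0 ≤ u) (c y : ℝ) :
    c * (max y 0 - u) ≤ surrogate c y * (y - u) := by
  unfold surrogate
  split_ifs with hc
  · linarith
  · have hy : y < 0 := by
      by_contra! hy
      simp [max_eq_left hy] at hc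
    rw [max_eq_right hy.le] at hc ⊢
    have hc_nonneg : 0 ≤ c := by
      by_contra! hc_neg
      nlinarith
    nlinarith

/-- A run of the undiscounted magnitude learner: from round `1` on, the sequences are those computed
by the algorithm with parameter `ε` from the gradients `g`. Here `xt`, `gclip` and `gt` are `x̃`,
`g_clip` and `g̃_clip`. -/
structure IsRun (ε : ℝ) (v s h xt x g gclip gt : ℕ → ℝ) : Prop where
  v_one : v 1 = 0
  s_one : s 1 = 0
  h_one : h 1 = 0
  xt_eq : ∀ t, 1 ≤ t → xt t = ε * prediction (h t) (v t) (s t)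
  x_eq : ∀ t, 1 ≤ t → x t = max (xt t) 0
  gclip_eq : ∀ t, 1 ≤ t → gclip t = max (-(h t)) (min (g t) (h t))
  h_succ : ∀ t, 1 ≤ t → h (t + 1) = max (h t) |g t|
  gt_eq : ∀ t, 1 ≤ t → gt t = surrogate (gclip t) (xt t)
  v_succ : ∀ t, 1 ≤ t → v (t + 1) = v t + gt t ^ 2
  s_succ : ∀ t, 1 ≤ t → s (t + 1) = s t - gt t

namespace IsRun

variable {ε : ℝ} {v s h xt x g gclip gt : ℕ → ℝ} (run : IsRun ε v s h xt x g gclip gt) {t : ℕ}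

include run

theorem h_le_h_succ (ht : 1 ≤ t) : h t ≤ h (t + 1) :=
  run.h_succ t ht ▸ le_max_left _ _

theorem h_nonneg (ht : 1 ≤ t) : 0 ≤ h t := by
  induction t, ht using Nat.le_induction with
  | base => exact run.h_one.ge
  | succ t ht ih => exact ih.trans (run.h_le_h_succ ht)

theorem h_succ_eq_sup' (ht : 1 ≤ t) :
    h (t + 1) = (Finset.Icc 1 t).sup' (Finset.nonempty_Icc.mpr ht) fun i ↦ |g i| := by
  induction t, ht using Nat.le_induction with
  | base => simp [run.h_succ 1 le_rfl, run.h_one]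
  | succ t ht ih =>
    have hinsert : Finset.Icc 1 (t + 1) = insert (t + 1) (Finset.Icc 1 t) :=
      (Finset.insert_Icc_right_eq_Icc_add_one (by lia)).symm
    rw [run.h_succ (t + 1) (by lia), ih, Finset.sup'_congr _ hinsert fun _ _ ↦ rfl,
      Finset.sup'_insert, max_comm]

theorem abs_gt_le_h (ht : 1 ≤ t) : |gt t| ≤ h t := by
  rw [run.gt_eq t ht, run.gclip_eq t ht]
  exact (abs_surrogate_le _ _).trans (abs_clip_le (run.h_nonneg ht) _)

theorem gt_sq_le (ht : 1 ≤ t) : gt t ^ 2 ≤ g t ^ 2 := by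
  rw [sq_le_sq, run.gt_eq t ht, run.gclip_eq t ht]
  exact (abs_surrogate_le _ _).trans (abs_clip_le_abs (run.h_nonneg ht) _)

theorem v_eq_sum (ht : 1 ≤ t) : v t = ∑ i ∈ Finset.Ico 1 t, gt i ^ 2 := by
  induction t, ht using Nat.le_induction with
  | base => simp [run.v_one]
  | succ t ht ih => rw [Finset.sum_Ico_succ_top ht, run.v_succ t ht, ih]

theorem v_nonneg (ht : 1 ≤ t) : 0 ≤ v t :=
  run.v_eq_sum ht ▸ Finset.sum_nonneg fun i _ ↦ sq_nonneg (gt i)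

theorem v_le_sum (ht : 1 ≤ t) : v t ≤ ∑ i ∈ Finset.Ico 1 t, g i ^ 2 :=
  run.v_eq_sum ht ▸ Finset.sum_le_sum fun _ hi ↦ run.gt_sq_le (Finset.mem_Ico.mp hi).1

theorem s_eq_zero (ht : 1 ≤ t) (hh : h t = 0) : s t = 0 := by
  induction t, ht using Nat.le_induction with
  | base => exact run.s_one
  | succ t ht ih =>
    have hh' : h t = 0 := le_antisymm (hh ▸ run.h_le_h_succ ht) (run.h_nonneg ht)
    have hgt : gt t = 0 := abs_nonpos_iff.mp (hh' ▸ run.abs_gt_le_h ht)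
    rw [run.s_succ t ht, ih hh', hgt, sub_zero]

/-- A negative `s t` forces a negative prediction, hence a nonpositive surrogate gradient, so `s`
can only fall below `0` by a single clipped gradient. -/
theorem neg_h_le_s_sub_gt (hε : 0 < ε) (ht : 1 ≤ t) (hs : -h t ≤ s t) :
    -h t ≤ s t - gt t := by
  rcases lt_or_ge (s t) 0 with hs_neg | hs_nonneg
  · have hxt : xt t < 0 :=
      run.xt_eq t ht ▸ mul_neg_of_pos_of_neg hε (prediction_neg (run.v_nonneg ht) hs hs_neg)
    have hgt : gt t ≤ 0 := run.gt_eq t ht ▸ surrogate_nonpos hxt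
    linarith
  · linarith [(abs_le.mp (run.abs_gt_le_h ht)).2]

theorem neg_h_le_s (hε : 0 < ε) (ht : 1 ≤ t) : -h t ≤ s t := by
  induction t, ht using Nat.le_induction with
  | base => simp [run.h_one, run.s_one]
  | succ t ht ih =>
    rw [run.s_succ t ht]
    exact (neg_le_neg (run.h_le_h_succ ht)).trans (run.neg_h_le_s_sub_gt hε ht ih)

theorem potential_succ_add_le (hε : 0 < ε) (ht : 1 ≤ t) :
    potential (scale (h (t + 1)) (v (t + 1)) (s (t + 1))) (s (t + 1))
        + gt t * prediction (h t) (v t) (s t)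
      ≤ potential (scale (h t) (v t) (s t)) (s t) := by
  have hs := run.neg_h_le_s_sub_gt hε ht (run.neg_h_le_s hε ht)
  have hs_zero : h t = 0 → s (t + 1) = 0 := fun hh ↦ by
    rw [run.s_succ t ht, run.s_eq_zero ht hh,
      abs_nonpos_iff.mp (hh ▸ run.abs_gt_le_h ht : |gt t| ≤ 0), sub_zero]
  have hupdate : potential (scale (h (t + 1)) (v (t + 1)) (s (t + 1))) (s (t + 1))
      ≤ stepPotential (h t) (v t) (s t) (gt t) := by
    rw [stepPotential, ← run.v_succ t ht, ← run.s_succ t ht]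
    exact potential_scale_le_of_le (run.h_nonneg ht) (run.h_le_h_succ ht)
      (run.v_nonneg (by lia)) (run.s_succ t ht ▸ hs) hs_zero
  have hstep := stepPotential_add_mul_prediction_le (run.v_nonneg ht) (run.neg_h_le_s hε ht)
    (run.abs_gt_le_h ht) hs
  linarith

theorem gclip_mul_sub_le {u : ℝ} (hu : 0 ≤ u) (ht : 1 ≤ t) :
    gclip t * (x t - u) ≤ gt t * (ε * prediction (h t) (v t) (s t) - u) := by
  rw [run.x_eq t ht, run.gt_eq t ht, ← run.xt_eq t ht]
  exact mul_max_sub_le_surrogate_mul_sub hu _ _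

theorem sum_gclip_mul_sub_le {u : ℝ} (hε : 0 < ε) (hu : 0 ≤ u) (ht : 1 ≤ t) :
    ∑ i ∈ Finset.Ico 1 t, gclip i * (x i - u)
      ≤ u * s t - ε * potential (scale (h t) (v t) (s t)) (s t) := by
  induction t, ht using Nat.le_induction with
  | base => simp [run.v_one, run.s_one, run.h_one, scale, potential]
  | succ t ht ih =>
    rw [Finset.sum_Ico_succ_top ht]
    have hround := run.gclip_mul_sub_le hu ht
    have hpotential := mul_le_mul_of_nonneg_left (run.potential_succ_add_le hε ht) hε.le
    have hs : u * s (t + 1) = u * s t - u * gt t := by rw [run.s_succ t ht, mul_sub]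
    linarith

theorem sum_gclip_mul_sub_le_threshold {u a : ℝ} {T : ℕ} (hε : 0 < ε) (hu : 0 ≤ u) (ha : 1 ≤ a)
    (hexp : 2 * (u / ε) + 1 ≤ exp ((a - 1) ^ 2)) :
    ∑ t ∈ Finset.Icc 1 T, gclip t * (x t - u)
      ≤ ε * √(scale (h (T + 1)) (∑ t ∈ Finset.Icc 1 T, g t ^ 2)
            (threshold (h (T + 1)) (∑ t ∈ Finset.Icc 1 T, g t ^ 2) a))
        + u * threshold (h (T + 1)) (∑ t ∈ Finset.Icc 1 T, g t ^ 2) a := by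
  have hT : 1 ≤ T + 1 := Nat.le_add_left 1 T
  have hpotential := run.sum_gclip_mul_sub_le hε hu hT
  have hv := run.v_le_sum hT
  rw [Finset.Ico_add_one_right_eq_Icc] at hpotential hv
  have hconjugate := mul_le_mul_of_nonneg_left (mul_sub_potential_le (run.h_nonneg hT)
    (run.v_nonneg hT) hv (run.s_eq_zero hT) (div_nonneg hu hε.le) ha hexp) hε.le
  have hu_eq : ε * (u / ε) = u := mul_div_cancel₀ u hε.ne'
  rw [mul_sub, mul_add, ← mul_assoc, ← mul_assoc, hu_eq] at hconjugate
  exact hpotential.trans hconjugate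

end IsRun

theorem sum_mul_sub_le_sum_clipped_add {ι : Type*} (I : Finset ι) (g c x : ι → ℝ) (u : ℝ) :
    ∑ i ∈ I, g i * (x i - u)
      ≤ ∑ i ∈ I, c i * (x i - u) + ∑ i ∈ I, |g i - c i| * |x i - u| := by
  rw [← Finset.sum_add_distrib]
  refine Finset.sum_le_sum fun i _ ↦ ?_
  rw [← abs_mul]
  linarith [le_abs_self ((g i - c i) * (x i - u))]

end MagnitudeLearner

open MagnitudeLearner

/-- Undiscounted regret guarantee for the 1D magnitude learner on `[0,∞)`
(Algorithm 2). -/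
theorem magnitude_learner_undiscounted_regret
    (eps : ℝ) (heps : 0 < eps)
    (v s h xt x g gclip gt : ℕ → ℝ)
    (hv1 : v 1 = 0) (hs1 : s 1 = 0) (hh1 : h 1 = 0)
    (hxt : ∀ t, 1 ≤ t →
      (h t = 0 → xt t = 0) ∧
      (h t ≠ 0 → xt t =
        eps * erfi (s t / (2 * Real.sqrt (v t + 2 * h t * s t + 16 * (h t)^2)))
        - eps * h t / Real.sqrt (v t + 2 * h t * s t + 16 * (h t)^2)
          * Real.exp ((s t)^2 / (4 * (v t + 2 * h t * s t + 16 * (h t)^2)))))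
    (hx : ∀ t, 1 ≤ t → x t = max (xt t) 0)
    (hgclip : ∀ t, 1 ≤ t → gclip t = max (-(h t)) (min (g t) (h t)))
    (hh : ∀ t, 1 ≤ t → h (t+1) = max (h t) |g t|)
    (hgt : ∀ t, 1 ≤ t →
      gt t = if gclip t * xt t ≥ gclip t * x t then gclip t else 0)
    (hvrec : ∀ t, 1 ≤ t → v (t+1) = v t + (gt t)^2)
    (hsrec : ∀ t, 1 ≤ t → s (t+1) = s t - gt t)
    (T : ℕ) (hT : 1 ≤ T)
    (u : ℝ) (hu : 0 ≤ u)
    (G S : ℝ)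
    (hG : G = (Finset.Icc 1 T).sup' (Finset.nonempty_Icc.mpr hT) (fun t => |g t|))
    (hS : S = 8 * G * (1 + Real.sqrt (Real.log (2 * u * eps⁻¹ + 1)))^2
        + 2 * Real.sqrt ((∑ t ∈ Finset.Icc 1 T, (g t)^2) + 16 * G^2)
          * (1 + Real.sqrt (Real.log (2 * u * eps⁻¹ + 1)))) :
    ∑ t ∈ Finset.Icc 1 T, g t * (x t - u)
      ≤ eps * Real.sqrt ((∑ t ∈ Finset.Icc 1 T, (g t)^2) + 2 * G * S + 16 * G^2)
        + u * S
        + ∑ t ∈ Finset.Icc 1 T, |g t - gclip t| * |x t - u| := by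
  have run : IsRun eps v s h xt x g gclip gt :=
    { v_one := hv1, s_one := hs1, h_one := hh1, x_eq := hx, gclip_eq := hgclip, h_succ := hh
      v_succ := hvrec, s_succ := hsrec
      gt_eq := fun t ht ↦ by rw [hgt t ht, hx t ht, surrogate]
      xt_eq := fun t ht ↦ by
        by_cases h0 : h t = 0
        · rw [(hxt t ht).1 h0, prediction, if_pos h0, mul_zero]
        · rw [(hxt t ht).2 h0, prediction_of_ne_zero h0, kernel, scale]
          ring }
  have hratio : 0 ≤ 2 * u * eps⁻¹ := by positivity
  have hlog : 0 ≤ Real.log (2 * u * eps⁻¹ + 1) := Real.log_nonneg (by linarith)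
  have hexp : 2 * (u / eps) + 1
      ≤ Real.exp ((1 + √(Real.log (2 * u * eps⁻¹ + 1)) - 1) ^ 2) := by
    rw [add_sub_cancel_left, Real.sq_sqrt hlog, Real.exp_log (by linarith), div_eq_mul_inv,
      mul_assoc]
  have hclipped := run.sum_gclip_mul_sub_le_threshold (T := T) heps hu
    (le_add_of_nonneg_right (Real.sqrt_nonneg _)) hexp
  rw [run.h_succ_eq_sup' hT, ← hG, threshold, ← hS, scale] at hclipped
  exact (sum_mul_sub_le_sum_clipped_add _ g gclip x u).trans (add_le_add_left hclipped _)
end
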